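/- arXiv:2604.27698 — 3 statements merged into one kernel-verified Lean document; each statement's English description precedes it below -/
import Mathlib

section
/- Let k ≥ 2 be an integer, y > 0 a real number, and s ∈ ℂ with 1 < Re(s) < 3 (and additionally Re(s) < 2 if k = 2), such that s ∉ ℤ and ks ∉ ℤ. Then the two series below converge absolutely and ∫_0^∞ ((1+x)^{−s} − 1) x^{(s+k−2)/(1−k)} cos(y x^{1/(k−1)}) dx = ((k−1) y^{ks−1}/Γ(s)) ∑_{j=0}^∞ [(−y^{k−1})^j / j!] Γ(j + s) Γ(1 + j − k(s + j)) sin((π/2)(ks + (k−1)j)) + (1/Γ(s)) ∑_{m=0}^∞ [(−1)^m y^{2m} / (2m)!] Γ((1 + 2m − s)/(k−1)) Γ((ks − 2m − 1)/(k−1)) − (k−1) y^{s−1} Γ(1−s) sin(πs/2). -/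
/-!
Put `n = k - 1`, `v = (s - 1) / n` and cut the integral at `x = 2`.

On `(0, 2]` the cosine is expanded in its power series `∑ cₘ x^(2m/n)`. With `Aₘ = 2m/n - v`, this
gives `∑ cₘ ∫₀² ((1 + x)^(-s) - 1) x^(Aₘ - 1) dx`. These integrals are what the analytically
continued Beta integral produces near zero: by `regBeta_eq`, `Γ(Aₘ) Γ(s - Aₘ) / Γ(s)` equals that
integral plus `2^Aₘ / Aₘ` minus `∑ⱼ bⱼ 2^(Aₘ - s - j) / (Aₘ - s - j)`, where `bⱼ = binom(-s, j)`.

On `(2, ∞)` the factor `(1 + x)^(-s)` is expanded as `∑ bⱼ x^(-s-j)`. Each term, and the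
subtracted `1`, leads to a tail `∫₂^∞ x^(-u-1) cos (y x^(1/n)) dx`, which by `farCos_eq` is
`n y^(nu) Γ(-nu) sin(π(nu + 1)/2)` minus `∑ₘ cₘ 2^(2m/n - u) / (2m/n - u)`.

In the sum of the two halves the boundary terms at `2` cancel. Those carrying both indices form
one double series `∑ cₘ bⱼ 2^(Aₘ - s - j) / (Aₘ - s - j)`, summed over `j` first in one half and
over `m` first in the other. It converges absolutely, because `ks ∉ ℤ` keeps the denominators
away from zero (`summable_bdry`), so the two orders agree. What is left is the claimed right-hand
side, and the absolute convergence of both of its series follows from the same decompositions.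

Both closed forms (`tail_cos` and `regBeta_eq`) are first proved where the integrals converge, and
then extended in the exponent by a recurrence obtained from integration by parts.
-/

noncomputable section

namespace MeijerSeries
open Complex MeasureTheory Set Filter Topology

/-! ### Termwise integration and the Laplace transform of a power -/

/-- Uniform lower bound for all small denominators that occur in the series below. -/
lemma exists_dist_int {w : ℂ} (hw : ∀ m : ℤ, w ≠ m) :
    ∃ δ : ℝ, 0 < δ ∧ ∀ m : ℤ, δ ≤ ‖w - m‖ := by
  refine ⟨‖w - (round w.re : ℤ)‖, norm_pos_iff.2 (sub_ne_zero.2 (hw _)), fun m => ?_⟩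
  rw [← abs_norm, ← abs_norm (w - m), ← sq_le_sq, ← normSq_eq_norm_sq, ← normSq_eq_norm_sq,
    normSq_apply, normSq_apply]
  have := round_le w.re m
  have h2 := mul_self_le_mul_self (abs_nonneg _) this
  rw [abs_mul_abs_self, abs_mul_abs_self] at h2
  simpa using h2

/-- Termwise integration of a series of functions bounded by a summable sequence of constants,
against an integrable weight. -/
lemma hasSum_integral_mul {μ : Measure ℝ} {f : ℝ → ℂ} (hf : Integrable f μ) {g : ℕ → ℝ → ℂ}
    {G : ℝ → ℂ} {B : ℕ → ℝ} (hB : Summable B) (hgm : ∀ m, AEStronglyMeasurable (g m) μ)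
    (hg : ∀ m, ∀ᵐ x ∂μ, ‖g m x‖ ≤ B m) (hG : ∀ᵐ x ∂μ, HasSum (fun m => g m x) (G x)) :
    HasSum (fun m => ∫ x, f x * g m x ∂μ) (∫ x, f x * G x ∂μ) := by
  refine hasSum_integral_of_dominated_convergence (fun m x => ‖f x‖ * B m)
    (fun m => hf.1.mul (hgm m)) (fun m => ?_) ?_ ?_ ?_
  · filter_upwards [hg m] with x hx
    rw [norm_mul]
    gcongr
  · exact Eventually.of_forall fun x => hB.mul_left _
  · simp_rw [tsum_mul_left]
    exact hf.norm.mul_const _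
  · filter_upwards [hG] with x hx
    exact hx.mul_left _

lemma aesm_of_continuousOn_Ioi {c : ℝ} {f : ℝ → ℂ} (hf : ContinuousOn f (Ioi c)) :
    AEStronglyMeasurable f (volume.restrict (Ioi c)) :=
  hf.aestronglyMeasurable measurableSet_Ioi

lemma continuousOn_cpow {c : ℝ} (hc : 0 ≤ c) (a : ℂ) :
    ContinuousOn (fun x : ℝ => (x : ℂ) ^ a) (Ioi c) := fun x hx =>
  (continuousAt_ofReal_cpow_const x a (Or.inr (hc.trans_lt hx).ne')).continuousWithinAt

lemma integrableOn_cpow_mul_exp {a z : ℂ} (ha : 0 < a.re) (hz : 0 < z.re) :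
    IntegrableOn (fun t : ℝ => (t : ℂ) ^ (a - 1) * cexp (-(z * t))) (Ioi 0) := by
  have h := integrableOn_rpow_mul_exp_neg_mul_rpow (p := 1) (s := a.re - 1) (b := z.re)
    (by linarith) zero_lt_one hz
  refine Integrable.mono' h ?_ ?_
  · exact aesm_of_continuousOn_Ioi ((continuousOn_cpow le_rfl _).mul (by fun_prop))
  · filter_upwards [ae_restrict_mem measurableSet_Ioi] with t ht
    rw [norm_mul, norm_cpow_eq_rpow_re_of_pos ht, norm_exp]
    simp

/-- The classical formula for real `z > 0`, extended to the half-plane by the identity theorem. -/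
lemma laplace_gamma {a z : ℂ} (ha : 0 < a.re) (hz : 0 < z.re) :
    ∫ t in Ioi (0 : ℝ), (t : ℂ) ^ (a - 1) * cexp (-(z * t)) = z ^ (-a) * Gamma a := by
  set H : Set ℂ := {z : ℂ | 0 < z.re} with hH
  have hHo : IsOpen H := isOpen_lt continuous_const continuous_re
  have hHc : IsPreconnected H := (convex_halfSpace_re_gt 0).isPreconnected
  have hd1 : DifferentiableOn ℂ
      (fun z : ℂ => ∫ t in Ioi (0 : ℝ), (t : ℂ) ^ (a - 1) * cexp (-(z * t))) H := by
    intro z hz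
    have hz : 0 < z.re := hz
    have hz2 : 0 < ((z.re / 2 : ℝ) : ℂ).re := by simpa using hz
    have key := hasDerivAt_integral_of_dominated_loc_of_deriv_le (𝕜 := ℂ)
      (μ := volume.restrict (Ioi (0 : ℝ)))
      (F := fun z t => (t : ℂ) ^ (a - 1) * cexp (-(z * t)))
      (F' := fun z t => -((t : ℂ) ^ (a + 1 - 1) * cexp (-(z * t))))
      (x₀ := z) (s := Metric.ball z (z.re / 2))
      (bound := fun t => ‖(t : ℂ) ^ (a + 1 - 1) * cexp (-(((z.re / 2 : ℝ) : ℂ) * t))‖)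
      (Metric.ball_mem_nhds _ (by linarith)) ?_ (integrableOn_cpow_mul_exp ha hz) ?_ ?_
      (integrableOn_cpow_mul_exp (a := a + 1) (by simp; linarith) hz2).norm ?_
    · exact key.2.differentiableAt.differentiableWithinAt
    · exact Eventually.of_forall fun z =>
        aesm_of_continuousOn_Ioi ((continuousOn_cpow le_rfl _).mul (by fun_prop))
    · exact aesm_of_continuousOn_Ioi ((continuousOn_cpow le_rfl _).mul (by fun_prop)).neg
    · filter_upwards [ae_restrict_mem measurableSet_Ioi] with t ht x hx
      have ht : 0 < t := ht
      rw [norm_neg, norm_mul, norm_mul, norm_exp, norm_exp]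
      refine mul_le_mul_of_nonneg_left (Real.exp_le_exp.2 ?_) (norm_nonneg _)
      have h1 : z.re - x.re ≤ ‖x - z‖ := by
        have := (abs_le.1 (abs_re_le_norm (x - z))).1
        simp at this; linarith
      rw [Metric.mem_ball, dist_eq_norm] at hx
      simp only [neg_re, re_mul_ofReal, ofReal_re]
      nlinarith
    · filter_upwards [ae_restrict_mem measurableSet_Ioi] with t ht x hx
      have ht : 0 < t := ht
      have h1 : HasDerivAt (fun x : ℂ => cexp (-(x * t))) (cexp (-(x * t)) * (-(1 * t))) x :=
        (((hasDerivAt_id x).mul_const (t : ℂ)).neg).cexp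
      refine (h1.const_mul ((t : ℂ) ^ (a - 1))).congr_deriv ?_
      have : (t : ℂ) ^ (a + 1 - 1) = (t : ℂ) ^ (a - 1) * t := by
        rw [show a + 1 - 1 = (a - 1) + 1 by ring, cpow_add _ _ (by exact_mod_cast ht.ne'), cpow_one]
      rw [this]; ring
  have hd2 : DifferentiableOn ℂ (fun z : ℂ => z ^ (-a) * Gamma a) H := by
    intro z hz
    have : z ∈ slitPlane := Or.inl hz
    exact ((differentiableAt_id.cpow_const this).mul_const _).differentiableWithinAt
  have hE := (hd1.analyticOnNhd hHo).eqOn_of_preconnected_of_frequently_eq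
    (hd2.analyticOnNhd hHo) hHc (z₀ := 1) (by simp [hH]) ?_
  · exact hE hz
  · have hreal : ∀ r : ℝ, 0 < r →
        ∫ t in Ioi (0 : ℝ), (t : ℂ) ^ (a - 1) * cexp (-((r : ℂ) * t)) = (r : ℂ) ^ (-a) * Gamma a := by
      intro r hr
      rw [integral_cpow_mul_exp_neg_mul_Ioi ha hr, one_div, cpow_neg, inv_cpow]
      rw [arg_ofReal_of_nonneg hr.le]; exact Real.pi_pos.ne
    have ht : Tendsto (fun r : ℝ => (r : ℂ)) (𝓝[>] 1) (𝓝[≠] 1) := by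
      refine tendsto_nhdsWithin_iff.2 ⟨?_, ?_⟩
      · have : Tendsto (fun r : ℝ => (r : ℂ)) (𝓝 1) (𝓝 ((1 : ℝ) : ℂ)) :=
          continuous_ofReal.tendsto 1
        simpa using this.mono_left nhdsWithin_le_nhds
      · filter_upwards [self_mem_nhdsWithin] with r hr
        have : (1 : ℝ) < r := hr
        simpa using this.ne'
    refine ht.frequently (Eventually.frequently ?_)
    filter_upwards [self_mem_nhdsWithin] with r hr
    exact hreal r (zero_lt_one.trans hr)

/-! ### Tails of the Mellin transform of the cosine -/

/-- The series `∑ (-ζ)^m / (m! (m + 1 - w))`. For `Re w < 1` it equals `∫₀¹ t^(-w) e^(-ζ t) dt`. -/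
def expSer (w ζ : ℂ) : ℂ := ∑' m : ℕ, (-ζ) ^ m / (m.factorial : ℂ) / (m + 1 - w)

lemma dist_succ {w : ℂ} {δ : ℝ} (h : ∀ m : ℤ, δ ≤ ‖w - m‖) (m : ℕ) : δ ≤ ‖(m : ℂ) + 1 - w‖ := by
  have := h (m + 1 : ℤ)
  rw [norm_sub_rev] at this
  simpa using this

lemma norm_expSer_term_le {w ζ : ℂ} {δ R : ℝ} (hδ : 0 < δ) (h : ∀ m : ℤ, δ ≤ ‖w - m‖)
    (hR : ‖ζ‖ ≤ R) (m : ℕ) :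
    ‖(-ζ) ^ m / (m.factorial : ℂ) / (m + 1 - w)‖ ≤ R ^ m / m.factorial / δ := by
  rw [norm_div, norm_div, norm_pow, norm_neg, Complex.norm_natCast]
  have := dist_succ h m
  have := (norm_nonneg ζ).trans hR
  gcongr

lemma summable_expSer {w : ℂ} (hw : ∀ m : ℤ, w ≠ m) (ζ : ℂ) :
    Summable fun m : ℕ => (-ζ) ^ m / (m.factorial : ℂ) / (m + 1 - w) := by
  obtain ⟨δ, hδ, h⟩ := exists_dist_int hw
  exact ((Real.summable_pow_div_factorial ‖ζ‖).div_const δ).of_norm_bounded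
    (fun m => norm_expSer_term_le hδ h le_rfl m)

/-- The counterpart for `expSer` of integrating `t^(-w) e^(-ζ t)` by parts. -/
lemma expSer_rec {w : ℂ} (hw : ∀ m : ℤ, w ≠ m) (ζ : ℂ) :
    (1 - w) * expSer w ζ - ζ * expSer (w - 1) ζ = cexp (-ζ) := by
  have hw' : ∀ m : ℤ, w - 1 ≠ m := fun m h => hw (m + 1) (by push_cast; rw [← h]; ring)
  have h1 := (summable_expSer hw ζ).hasSum.mul_left (1 - w)
  have h2 := (summable_expSer hw' ζ).hasSum.mul_left (-ζ)
  have h3 : HasSum (fun m : ℕ => (m : ℂ) * ((-ζ) ^ m / (m.factorial : ℂ) / (m + 1 - w)))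
      (-ζ * expSer (w - 1) ζ) := by
    rw [← hasSum_nat_add_iff' 1]
    convert! h2 using 1
    · ext m
      have hm : ((m.factorial : ℕ) : ℂ) ≠ 0 := by exact_mod_cast m.factorial_ne_zero
      have hm1 : (m : ℂ) + 1 ≠ 0 := by exact_mod_cast m.succ_ne_zero
      rw [Nat.factorial_succ]
      push_cast
      rw [show (m : ℂ) + 1 - (w - 1) = m + 1 + 1 - w by ring]
      field_simp
      ring
    · simp [expSer]
  have h4 := h1.add h3
  have h5 : HasSum (fun m : ℕ => (-ζ) ^ m / (m.factorial : ℂ)) (cexp (-ζ)) := by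
    have := NormedSpace.expSeries_div_hasSum_exp (-ζ)
    rwa [← Complex.exp_eq_exp_ℂ] at this
  have h6 := h4.unique (h5.congr_fun ?_)
  · change (1 - w) * expSer w ζ + _ = _ at h6
    rw [← h6]; ring
  · intro m
    have : (m : ℂ) + 1 - w ≠ 0 := fun h => hw (m + 1) (by push_cast; linear_combination -h)
    field_simp
    ring

lemma integrableOn_tail {w z : ℂ} (hz : 0 < z.re) {T : ℝ} (hT : 0 < T) :
    IntegrableOn (fun t : ℝ => (t : ℂ) ^ (-w) * cexp (-(z * t))) (Ioi T) := by
  obtain ⟨N, hN⟩ := exists_nat_gt w.re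
  have h1 := (integrableOn_cpow_mul_exp (a := N - w + 1) (z := z)
    (by simp; linarith) hz).mono_set (Ioi_subset_Ioi hT.le)
  have h2 : ∀ᵐ t : ℝ ∂(volume.restrict (Ioi T)), ‖((t⁻¹ : ℝ) : ℂ) ^ N‖ ≤ (T⁻¹) ^ N := by
    filter_upwards [ae_restrict_mem measurableSet_Ioi] with t ht
    have ht : T < t := ht
    have := hT.trans ht
    rw [norm_pow, norm_real, Real.norm_of_nonneg (by positivity)]
    gcongr
  have h3 := Integrable.bdd_mul h1 (by fun_prop) h2
  refine h3.congr ?_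
  filter_upwards [ae_restrict_mem measurableSet_Ioi] with t ht
  have ht0 : (t : ℂ) ≠ 0 := by exact_mod_cast (hT.trans ht).ne'
  rw [show (N : ℂ) - w + 1 - 1 = -w + N by ring, cpow_add _ _ ht0, cpow_natCast]
  have hN1 : ((t : ℂ)⁻¹) ^ N * (t : ℂ) ^ N = 1 := by
    rw [← mul_pow, inv_mul_cancel₀ ht0, one_pow]
  push_cast
  linear_combination ((t : ℂ) ^ (-w) * cexp (-(z * t))) * hN1

/-- For `Re w < 1` the tail is the full Laplace integral minus the integral over `(0, T]`, and the
latter is computed from the exponential series. -/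
lemma tail_base {w z : ℂ} (hw : ∀ m : ℤ, w ≠ m) (hw1 : w.re < 1) (hz : 0 < z.re) {T : ℝ}
    (hT : 0 < T) :
    ∫ t in Ioi T, (t : ℂ) ^ (-w) * cexp (-(z * t)) =
      z ^ (w - 1) * Gamma (1 - w) - (T : ℂ) ^ (1 - w) * expSer w (z * T) := by
  have hI := integrableOn_cpow_mul_exp (a := 1 - w) (z := z) (by simpa using hw1) hz
  have hg := laplace_gamma (a := 1 - w) (z := z) (by simpa using hw1) hz
  rw [show 1 - w - 1 = -w by ring] at hI hg
  rw [← Ioc_union_Ioi_eq_Ioi hT.le] at hg hI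
  rw [setIntegral_union (Ioc_disjoint_Ioi le_rfl) measurableSet_Ioi hI.left_of_union
    hI.right_of_union, neg_sub] at hg
  rw [← hg]
  suffices h : ∫ t in Ioc 0 T, (t : ℂ) ^ (-w) * cexp (-(z * t)) =
      (T : ℂ) ^ (1 - w) * expSer w (z * T) by rw [h]; ring
  have hT0 : (T : ℂ) ≠ 0 := by exact_mod_cast hT.ne'
  have hf : IntegrableOn (fun t : ℝ => (t : ℂ) ^ (-w)) (Ioc 0 T) := by
    rw [← intervalIntegrable_iff_integrableOn_Ioc_of_le hT.le]
    exact intervalIntegral.intervalIntegrable_cpow' (by simpa using hw1)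
  have key := hasSum_integral_mul (μ := volume.restrict (Ioc 0 T)) hf
    (g := fun m t => (-(z * t)) ^ m / (m.factorial : ℂ)) (G := fun t => cexp (-(z * t)))
    (B := fun m => (‖z‖ * T) ^ m / m.factorial) (Real.summable_pow_div_factorial _)
    (fun m => by fun_prop) (fun m => ?_) (Eventually.of_forall fun t => ?_)
  · rw [← key.tsum_eq, expSer, ← tsum_mul_left]
    congr 1
    ext m
    have hi := integral_cpow (a := 0) (b := T) (r := m - w)
      (Or.inl (by simp; have := m.cast_nonneg (α := ℝ); linarith))
    rw [intervalIntegral.integral_of_le hT.le] at hi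
    have hm : (m : ℂ) + 1 - w ≠ 0 := fun h => hw (m + 1) (by push_cast; linear_combination -h)
    calc ∫ t in Ioc 0 T, (t : ℂ) ^ (-w) * ((-(z * t)) ^ m / (m.factorial : ℂ))
        = ∫ t in Ioc 0 T, ((-z) ^ m / (m.factorial : ℂ)) * (t : ℂ) ^ ((m : ℂ) - w) := by
          refine setIntegral_congr_fun measurableSet_Ioc fun t ht => ?_
          have ht0 : (t : ℂ) ≠ 0 := by exact_mod_cast ht.1.ne'
          change (t : ℂ) ^ (-w) * ((-(z * t)) ^ m / (m.factorial : ℂ)) = _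
          rw [sub_eq_neg_add, cpow_add _ _ ht0, cpow_natCast, ← neg_mul, mul_pow]
          ring
      _ = _ := by
          rw [integral_const_mul, hi, show (m : ℂ) - w + 1 = 1 - w + m by ring, ofReal_zero,
            zero_cpow (by rwa [show 1 - w + (m : ℂ) = m + 1 - w by ring]), cpow_add _ _ hT0,
            cpow_natCast, ← neg_mul, mul_pow, show 1 - w + (m : ℂ) = m + 1 - w by ring]
          field_simp
          ring
  · filter_upwards [ae_restrict_mem measurableSet_Ioc] with t ht
    rw [norm_div, norm_pow, norm_neg, norm_mul, Complex.norm_natCast, norm_real,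
      Real.norm_of_nonneg ht.1.le]
    have := ht.1.le
    have := ht.2
    gcongr
  · have := NormedSpace.expSeries_div_hasSum_exp (-(z * t))
    rwa [← Complex.exp_eq_exp_ℂ] at this

/-- Extension of `tail_base` to all non-integral `w`: integration by parts lowers `Re w` by one. -/
lemma tail_pos {z : ℂ} (hz : 0 < z.re) {T : ℝ} (hT : 0 < T) (N : ℕ) :
    ∀ {w : ℂ} (_ : ∀ m : ℤ, w ≠ m) (_ : w.re < N + 1),
    ∫ t in Ioi T, (t : ℂ) ^ (-w) * cexp (-(z * t)) =
      z ^ (w - 1) * Gamma (1 - w) - (T : ℂ) ^ (1 - w) * expSer w (z * T) := by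
  induction N with
  | zero => intro w hw hw1; exact tail_base hw (by simpa using hw1) hz hT
  | succ N ih =>
    intro w hw hw1
    have hw' : ∀ m : ℤ, w - 1 ≠ m := fun m h => hw (m + 1) (by push_cast; rw [← h]; ring)
    have IH := ih hw' (by push_cast at hw1; simp; linarith)
    have hz0 : z ≠ 0 := by rintro rfl; simp at hz
    have hT0 : (T : ℂ) ≠ 0 := by exact_mod_cast hT.ne'
    have h1w : 1 - w ≠ 0 := fun h => hw 1 (by push_cast; linear_combination -h)
    have hi1 := integrableOn_tail (w := w) hz hT
    have hi2 := integrableOn_tail (w := w - 1) hz hT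
    have hder : ∀ t ∈ Ici T, HasDerivAt (fun t : ℝ => (t : ℂ) ^ (1 - w) * cexp (-(z * t)))
        ((1 - w) * ((t : ℂ) ^ (-w) * cexp (-(z * t))) -
          z * ((t : ℂ) ^ (-(w - 1)) * cexp (-(z * t)))) t := by
      intro t ht
      have ht0 : t ≠ 0 := (hT.trans_le ht).ne'
      have hp : HasDerivAt (fun t : ℝ => (t : ℂ) ^ (1 - w)) ((1 - w) * (t : ℂ) ^ (-w)) t := by
        have := hasDerivAt_ofReal_cpow_const ht0 h1w
        rwa [show 1 - w - 1 = -w by ring] at this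
      have he : HasDerivAt (fun t : ℝ => cexp (-(z * t))) (cexp (-(z * t)) * (-(z * 1))) t :=
        (((hasDerivAt_id t).ofReal_comp.const_mul z).neg).cexp
      refine (hp.mul he).congr_deriv ?_
      rw [show -(w - 1) = 1 - w by ring]
      ring
    have hlim : Tendsto (fun t : ℝ => (t : ℂ) ^ (1 - w) * cexp (-(z * t))) atTop (𝓝 0) := by
      rw [tendsto_zero_iff_norm_tendsto_zero]
      refine (tendsto_rpow_mul_exp_neg_mul_atTop_nhds_zero (1 - w).re z.re hz).congr' ?_
      filter_upwards [eventually_gt_atTop 0] with t ht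
      rw [norm_mul, norm_cpow_eq_rpow_re_of_pos ht, norm_exp]
      simp
    have hF := integral_Ioi_of_hasDerivAt_of_tendsto' hder
      ((hi1.const_mul _).sub (hi2.const_mul _)) hlim
    rw [integral_sub (hi1.const_mul _) (hi2.const_mul _), integral_const_mul, integral_const_mul,
      IH] at hF
    have hr := expSer_rec hw (z * T)
    have hG : Gamma (1 - (w - 1)) = (1 - w) * Gamma (1 - w) := by
      rw [show 1 - (w - 1) = (1 - w) + 1 by ring, Gamma_add_one _ h1w]
    have hzp : z ^ (w - 1) = z * z ^ (w - 1 - 1) := by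
      rw [cpow_sub (w - 1) 1 hz0, cpow_one]; field_simp
    have hTp : (T : ℂ) ^ (1 - (w - 1)) = T * (T : ℂ) ^ (1 - w) := by
      rw [show 1 - (w - 1) = 1 + (1 - w) by ring, cpow_add _ _ hT0, cpow_one]
    rw [hG, hTp] at hF
    rw [hzp]
    apply mul_left_cancel₀ h1w
    linear_combination hF + (T : ℂ) ^ (1 - w) * hr

/-- Boundary case `Re z = 0` of `tail_pos`, as the limit of `z + ε` for `ε → 0+`; the condition
`Re w > 1` provides the dominating function. -/
lemma tail_closed {w z : ℂ} (hw : ∀ m : ℤ, w ≠ m) (hw1 : 1 < w.re) (hz : 0 ≤ z.re) (hz0 : z ≠ 0)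
    {T : ℝ} (hT : 0 < T) :
    ∫ t in Ioi T, (t : ℂ) ^ (-w) * cexp (-(z * t)) =
      z ^ (w - 1) * Gamma (1 - w) - (T : ℂ) ^ (1 - w) * expSer w (z * T) := by
  have hzε : Tendsto (fun ε : ℝ => z + ε) (𝓝[>] 0) (𝓝 z) := by
    have : Continuous (fun ε : ℝ => z + ε) := by fun_prop
    simpa using (this.tendsto 0).mono_left nhdsWithin_le_nhds
  have hL : Tendsto (fun ε : ℝ => ∫ t in Ioi T, (t : ℂ) ^ (-w) * cexp (-((z + ε) * t)))
      (𝓝[>] 0) (𝓝 (∫ t in Ioi T, (t : ℂ) ^ (-w) * cexp (-(z * t)))) := by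
    refine tendsto_integral_filter_of_dominated_convergence (fun t => ‖(t : ℂ) ^ (-w)‖) ?_ ?_
      (integrableOn_Ioi_cpow_of_lt (by simpa using hw1) hT).norm ?_
    · exact Eventually.of_forall fun ε =>
        aesm_of_continuousOn_Ioi ((continuousOn_cpow hT.le _).mul (by fun_prop))
    · filter_upwards [self_mem_nhdsWithin] with ε hε
      have hε : 0 < ε := hε
      filter_upwards [ae_restrict_mem measurableSet_Ioi] with t ht
      have ht : 0 < t := hT.trans ht
      rw [norm_mul, norm_exp]
      refine mul_le_of_le_one_right (norm_nonneg _) (Real.exp_le_one_iff.2 ?_)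
      simp only [neg_re, re_mul_ofReal, add_re, ofReal_re]
      have : 0 ≤ (z.re + ε) * t := by positivity
      linarith
    · refine Eventually.of_forall fun t => Tendsto.const_mul _ ?_
      exact (continuous_exp.tendsto _).comp ((hzε.mul_const _).neg)
  have hslit : z ∈ slitPlane := by
    rw [mem_slitPlane_iff]
    by_contra! h
    exact hz0 (Complex.ext (le_antisymm h.1 hz) h.2)
  have hS : Tendsto (fun ε : ℝ => expSer w ((z + ε) * T)) (𝓝[>] 0) (𝓝 (expSer w (z * T))) := by
    obtain ⟨δ, hδ, h⟩ := exists_dist_int hw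
    have hζ : Tendsto (fun ε : ℝ => (z + ε) * T) (𝓝[>] 0) (𝓝 (z * T)) := hzε.mul_const _
    refine tendsto_tsum_of_dominated_convergence
      (bound := fun m : ℕ => (‖z * T‖ + 1) ^ m / m.factorial / δ)
      ((Real.summable_pow_div_factorial _).div_const δ) (fun m => ?_) ?_
    · exact (((hζ.neg).pow m).div_const _).div_const _
    · filter_upwards [hζ.norm.eventually_le_const (lt_add_one _)] with ε hε m
      exact norm_expSer_term_le hδ h hε m
  have hR := (((continuousAt_cpow_const (b := w - 1) hslit).tendsto.comp hzε).mul_const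
    (Gamma (1 - w))).sub (hS.const_mul ((T : ℂ) ^ (1 - w)))
  refine tendsto_nhds_unique hL (hR.congr' ?_)
  filter_upwards [self_mem_nhdsWithin] with ε hε
  obtain ⟨N, hN⟩ := exists_nat_gt w.re
  have hε : 0 < ε := hε
  exact (tail_pos (by simp; linarith) hT N hw (by linarith)).symm

lemma I_mul_cpow {y : ℝ} (hy : 0 < y) (a : ℂ) :
    (I * y) ^ a = (y : ℂ) ^ a * cexp (Real.pi / 2 * a * I) := by
  have hy0 : (y : ℂ) ≠ 0 := by exact_mod_cast hy.ne'
  rw [cpow_def_of_ne_zero (by simp [hy0]), cpow_def_of_ne_zero hy0, mul_comm I,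
    log_ofReal_mul hy I_ne_zero, log_I, ← Complex.exp_add, ofReal_log hy.le]
  ring_nf

lemma neg_I_mul_cpow {y : ℝ} (hy : 0 < y) (a : ℂ) :
    (-I * y) ^ a = (y : ℂ) ^ a * cexp (-(Real.pi / 2 * a * I)) := by
  have hy0 : (y : ℂ) ≠ 0 := by exact_mod_cast hy.ne'
  rw [cpow_def_of_ne_zero (by simp [hy0]), cpow_def_of_ne_zero hy0, mul_comm (-I),
    log_ofReal_mul hy (neg_ne_zero.2 I_ne_zero), log_neg_I, ← Complex.exp_add, ofReal_log hy.le]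
  ring_nf

/-- The cosine is half the sum of the exponentials with `z = ± i y`; the odd terms of the two
series cancel. -/
lemma tail_cos {w : ℂ} (hw : ∀ m : ℤ, w ≠ m) (hw1 : 1 < w.re) {y T : ℝ} (hy : 0 < y)
    (hT : 0 < T) :
    ∫ t in Ioi T, (t : ℂ) ^ (-w) * (Real.cos (y * t) : ℂ) =
      (y : ℂ) ^ (w - 1) * Gamma (1 - w) * Complex.sin (Real.pi * w / 2) -
        (T : ℂ) ^ (1 - w) *
          ∑' m : ℕ, (-1 : ℂ) ^ m * (y * T) ^ (2 * m) / ((2 * m).factorial : ℂ) /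
            (2 * m + 1 - w) := by
  have hy0 : (y : ℂ) ≠ 0 := by exact_mod_cast hy.ne'
  have e1 := tail_closed hw hw1 (z := I * y) (by simp) (by simp [hy0]) hT
  have e2 := tail_closed hw hw1 (z := -I * y) (by simp) (by simp [hy0]) hT
  have hInt : ∀ z : ℂ, z.re = 0 →
      IntegrableOn (fun t : ℝ => (t : ℂ) ^ (-w) * cexp (-(z * t))) (Ioi T) := by
    intro z hz
    refine (integrableOn_Ioi_cpow_of_lt (a := -w) (by simpa using hw1) hT).norm.mono' ?_ ?_
    · exact aesm_of_continuousOn_Ioi ((continuousOn_cpow hT.le _).mul (by fun_prop))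
    · filter_upwards with t
      rw [norm_mul, norm_exp]
      simp [hz]
  have hL : ∫ t in Ioi T, (t : ℂ) ^ (-w) * (Real.cos (y * t) : ℂ) =
      ((∫ t in Ioi T, (t : ℂ) ^ (-w) * cexp (-(I * y * t))) +
        ∫ t in Ioi T, (t : ℂ) ^ (-w) * cexp (-(-I * y * t))) / 2 := by
    rw [← integral_add (hInt _ (by simp)) (hInt _ (by simp)), ← integral_div]
    congr 1
    ext t
    rw [ofReal_cos, Complex.cos]
    push_cast
    rw [show -(I * y * t) = -(y * t : ℂ) * I by ring, show -(-I * y * t) = (y * t : ℂ) * I by ring]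
    ring
  have hs : HasSum (fun m : ℕ => (-1 : ℂ) ^ m * (y * T) ^ (2 * m) / ((2 * m).factorial : ℂ) /
            (2 * m + 1 - w)) ((expSer w (I * y * T) + expSer w (-I * y * T)) / 2) := by
    have h := (((summable_expSer hw (I * y * T)).hasSum.add
      (summable_expSer hw (-I * y * T)).hasSum)).div_const 2
    have hinj : Function.Injective (fun m : ℕ => 2 * m) := fun a b h => by simpa using h
    rw [← hinj.hasSum_iff] at h
    · refine h.congr_fun fun m => ?_
      simp only [Function.comp]
      have hI : (-(I * y * T)) ^ (2 * m) = (-1) ^ m * (y * T) ^ (2 * m) := by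
        rw [pow_mul, pow_mul _ 2 m, ← mul_pow]
        congr 1
        linear_combination (y * T : ℂ) ^ 2 * I_sq
      have hI' : (-(-I * y * T)) ^ (2 * m) = (-1) ^ m * (y * T) ^ (2 * m) := by
        rw [← hI, show -(-I * y * T) = -(-(I * y * T)) by ring, (even_two_mul m).neg_pow]
      rw [hI, hI']
      push_cast
      ring
    · intro x hx
      have hodd : Odd x := by
        rw [← Nat.not_even_iff_odd, even_iff_exists_two_mul]
        rintro ⟨c, rfl⟩
        exact hx ⟨c, rfl⟩
      rw [show -(-I * y * T) = -(-(I * y * T)) by ring, hodd.neg_pow]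
      ring
  have hsin : Complex.sin (Real.pi * w / 2) =
      (cexp (Real.pi / 2 * (w - 1) * I) + cexp (-(Real.pi / 2 * (w - 1) * I))) / 2 := by
    rw [← Complex.cos_sub_pi_div_two, Complex.cos]
    ring_nf
  rw [hL, e1, e2, hs.tsum_eq, I_mul_cpow hy, neg_I_mul_cpow hy, hsin]
  ring

/-! ### Binomial series and the Beta integral on the half-line -/

/-- The coefficient `binom(-s, j)`, written through the Gamma function. -/
def bc (s : ℂ) (j : ℕ) : ℂ := (-1) ^ j * Gamma (j + s) / (j.factorial * Gamma s)

lemma bc_rec {s : ℂ} (hs : 0 < s.re) (j : ℕ) : (j + 1) * bc s (j + 1) = -(s + j) * bc s j := by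
  have hj : (j : ℂ) + s ≠ 0 := by
    intro h
    have := congrArg re h
    have h2 := j.cast_nonneg (α := ℝ)
    simp at this; linarith
  have hf : ((j.factorial : ℕ) : ℂ) ≠ 0 := by exact_mod_cast j.factorial_ne_zero
  have hj1 : (j : ℂ) + 1 ≠ 0 := by exact_mod_cast j.succ_ne_zero
  have hG := Gamma_ne_zero_of_re_pos hs
  rw [bc, bc, Nat.factorial_succ]
  push_cast
  rw [show (j : ℂ) + 1 + s = (j + s) + 1 by ring, Gamma_add_one _ hj]
  field_simp
  ring

lemma bc_eq_choose {s : ℂ} (hs : 0 < s.re) (j : ℕ) : bc s j = Ring.choose (-s) j := by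
  induction j with
  | zero => simp [bc, Gamma_ne_zero_of_re_pos hs]
  | succ j ih =>
    have hj1 : (j : ℂ) + 1 ≠ 0 := by exact_mod_cast j.succ_ne_zero
    have hf : ((j.factorial : ℕ) : ℂ) ≠ 0 := by exact_mod_cast j.factorial_ne_zero
    apply mul_left_cancel₀ hj1
    rw [bc_rec hs, ih]
    have h1 := Ring.descPochhammer_eq_factorial_smul_choose (-s) j
    have h2 := Ring.descPochhammer_eq_factorial_smul_choose (-s) (j + 1)
    rw [descPochhammer_succ_right, Polynomial.smeval_mul, h1, Nat.factorial_succ] at h2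
    simp [Polynomial.smeval_natCast] at h2
    apply mul_left_cancel₀ hf
    linear_combination h2

lemma hasSum_binom {s : ℂ} (hs : 0 < s.re) {q : ℂ} (hq : ‖q‖ < 1) :
    HasSum (fun j => bc s j * q ^ j) ((1 + q) ^ (-s)) := by
  have h := (one_add_cpow_hasFPowerSeriesOnBall_zero (a := -s)).hasSum (y := q) (by
    rw [← ENNReal.ofReal_one, Metric.eball_ofReal]; simpa using hq)
  rw [zero_add] at h
  refine h.congr_fun fun j => ?_
  rw [binomialSeries_apply, bc_eq_choose hs]
  simp [List.ofFn_const]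

lemma summable_bc {s : ℂ} (hs : 0 < s.re) : Summable fun j => ‖bc s j‖ * (1 / 2 : ℝ) ^ j := by
  have := (hasSum_binom hs (q := 1 / 2) (by norm_num)).summable.norm
  refine this.congr fun j => ?_
  simp

lemma one_add_cpow_split {s : ℂ} {x : ℝ} (hx : 0 < x) :
    (1 + (x : ℂ)) ^ (-s) = (x : ℂ) ^ (-s) * (1 + (x : ℂ)⁻¹) ^ (-s) := by
  have h : (1 + (x : ℂ)) = (x : ℝ) * ((1 + x⁻¹ : ℝ) : ℂ) := by
    have : (x : ℂ) ≠ 0 := by exact_mod_cast hx.ne'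
    push_cast; field_simp; ring
  rw [h, mul_cpow_ofReal_nonneg hx.le (by positivity)]
  push_cast
  rfl

lemma norm_one_add_cpow_sub_le {s : ℂ} (hs : -1 < s.re) {u : ℝ} (hu : 0 ≤ u) :
    ‖(1 + (u : ℂ)) ^ (-s) - 1‖ ≤ ‖s‖ * u := by
  have h := Convex.norm_image_sub_le_of_norm_hasDerivWithin_le (𝕜 := ℝ) (s := Ici (0 : ℝ))
    (f := fun u : ℝ => (1 + (u : ℂ)) ^ (-s)) (f' := fun u : ℝ => -s * (1 + (u : ℂ)) ^ (-s - 1))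
    (C := ‖s‖) (x := 0) (y := u) ?_ ?_ (convex_Ici 0) (by simp) hu
  · simpa [abs_of_nonneg hu] using h
  · intro x hx
    have hx : (0 : ℝ) ≤ x := hx
    have h1 : HasDerivAt (fun z : ℂ => (1 + z) ^ (-s)) (-s * (1 + (x : ℂ)) ^ (-s - 1) * 1) (x : ℂ) :=
      ((hasDerivAt_id (x : ℂ)).const_add 1).cpow_const
        (Or.inl (by simp; linarith))
    exact (h1.comp_ofReal.congr_deriv (by ring)).hasDerivWithinAt
  · intro x hx
    have hx : (0 : ℝ) ≤ x := hx
    rw [norm_mul, norm_neg, show (1 + (x : ℂ)) = ((1 + x : ℝ) : ℂ) by push_cast; rfl,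
      norm_cpow_eq_rpow_re_of_pos (by linarith)]
    refine mul_le_of_le_one_right (norm_nonneg _) (Real.rpow_le_one_of_one_le_of_nonpos
      (by linarith) (by simp; linarith))

lemma continuousOn_one_add_cpow (s : ℂ) :
    ContinuousOn (fun u : ℝ => (1 + (u : ℂ)) ^ (-s)) (Ioi 0) := by
  intro x hx
  have hx : (0 : ℝ) < x := hx
  refine ContinuousAt.continuousWithinAt ?_
  have : (1 + (x : ℂ)) ∈ slitPlane := Or.inl (by simp; linarith)
  exact (continuousAt_cpow_const this).comp (f := fun u : ℝ => 1 + (u : ℂ)) (by fun_prop)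

lemma beta_image : (fun u : ℝ => u / (1 + u)) '' Ioi 0 = Ioo 0 1 := by
  ext x
  constructor
  · rintro ⟨u, hu, rfl⟩
    have hu : (0 : ℝ) < u := hu
    exact ⟨by positivity, by rw [div_lt_one (by positivity)]; linarith⟩
  · rintro ⟨h0, h1⟩
    have : 0 < 1 - x := by linarith
    refine ⟨x / (1 - x), by simpa using div_pos h0 this, ?_⟩
    field_simp
    ring

lemma beta_deriv (u : ℝ) (hu : u ∈ Ioi (0 : ℝ)) :
    HasDerivWithinAt (fun u : ℝ => u / (1 + u)) (1 / (1 + u) ^ 2) (Ioi 0) u := by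
  have hu : (0 : ℝ) < u := hu
  have := (hasDerivAt_id u).div ((hasDerivAt_id u).const_add 1) (by simp; positivity)
  refine (this.congr_deriv ?_).hasDerivWithinAt
  simp

lemma beta_inj : InjOn (fun u : ℝ => u / (1 + u)) (Ioi 0) := by
  intro a ha b hb h
  have ha : (0 : ℝ) < a := ha
  have hb : (0 : ℝ) < b := hb
  simp only at h
  rw [div_eq_div_iff (by positivity) (by positivity)] at h
  linarith

lemma beta_integrand {A s : ℂ} {u : ℝ} (hu : u ∈ Ioi (0 : ℝ)) :
    |1 / (1 + u) ^ 2| • (((u / (1 + u) : ℝ) : ℂ) ^ (A - 1) *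
      (1 - ((u / (1 + u) : ℝ) : ℂ)) ^ (s - A - 1)) =
    (u : ℂ) ^ (A - 1) * (1 + (u : ℂ)) ^ (-s) := by
  have hu : (0 : ℝ) < u := hu
  have h1 : (0 : ℝ) < 1 + u := by linarith
  have h10 : (((1 + u : ℝ)) : ℂ) ≠ 0 := by exact_mod_cast h1.ne'
  have e1 : (1 - ((u / (1 + u) : ℝ) : ℂ)) = (((1 + u)⁻¹ : ℝ) : ℂ) := by
    rw [← ofReal_one, ← ofReal_sub]; congr 1; field_simp; ring
  have e2 : (1 + (u : ℂ)) = ((1 + u : ℝ) : ℂ) := by push_cast; rfl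
  have einv : ∀ a : ℂ, (((1 + u)⁻¹ : ℝ) : ℂ) ^ a = ((1 + u : ℝ) : ℂ) ^ (-a) := by
    intro a
    rw [ofReal_inv, inv_cpow _ _ (by rw [arg_ofReal_of_nonneg h1.le]; exact Real.pi_pos.ne),
      cpow_neg]
  rw [e1, e2, div_eq_mul_inv u, ofReal_mul, mul_cpow_ofReal_nonneg hu.le (by positivity), einv, einv,
    abs_of_pos (by positivity), real_smul]
  have e3 : ((1 / (1 + u) ^ 2 : ℝ) : ℂ) = ((1 + u : ℝ) : ℂ) ^ (-2 : ℂ) := by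
    rw [cpow_neg, show (2 : ℂ) = ((2 : ℕ) : ℂ) by norm_num, cpow_natCast]
    push_cast; simp
  rw [e3, show -s = -2 + (-(A - 1) + -(s - A - 1)) by ring, cpow_add _ _ h10, cpow_add _ _ h10]
  ring

/-- The Beta integral after the substitution `x = u / (1 + u)`. -/
lemma beta_Ioi {A s : ℂ} (hA : 0 < A.re) (hAs : A.re < s.re) :
    IntegrableOn (fun u : ℝ => (u : ℂ) ^ (A - 1) * (1 + (u : ℂ)) ^ (-s)) (Ioi 0) ∧
    ∫ u in Ioi (0 : ℝ), (u : ℂ) ^ (A - 1) * (1 + (u : ℂ)) ^ (-s) =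
      Gamma A * Gamma (s - A) / Gamma s := by
  have hB : 0 < (s - A).re := by simp; linarith
  constructor
  · have h := betaIntegral_convergent hA hB
    rw [intervalIntegrable_iff_integrableOn_Ioo_of_le zero_le_one, ← beta_image,
      integrableOn_image_iff_integrableOn_abs_deriv_smul measurableSet_Ioi beta_deriv beta_inj] at h
    exact h.congr_fun (fun u hu => beta_integrand hu) measurableSet_Ioi
  · have h := betaIntegral_eq_Gamma_mul_div A (s - A) hA hB
    rw [betaIntegral, intervalIntegral.integral_of_le zero_le_one, integral_Ioc_eq_integral_Ioo,
      ← beta_image, integral_image_eq_integral_abs_deriv_smul measurableSet_Ioi beta_deriv beta_inj,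
      setIntegral_congr_fun measurableSet_Ioi (fun u hu => beta_integrand hu)] at h
    rw [h]; congr 2; ring

/-! ### Analytic continuation of the Beta integral -/

/-- The series `∑ binom(-s, j) 2^(-j) / (v - j)`. For `Re v < 0` it equals
`-2^(-v) ∫₂^∞ u^(v + s - 1) (1 + u)^(-s) du`. -/
def binSer (s v : ℂ) : ℂ := ∑' j : ℕ, bc s j * (1 / 2) ^ j / (v - j)

lemma norm_binSer_term_le {s v : ℂ} {δ : ℝ} (hδ : 0 < δ) (h : ∀ m : ℤ, δ ≤ ‖v - m‖) (j : ℕ) :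
    ‖bc s j * (1 / 2) ^ j / (v - j)‖ ≤ ‖bc s j‖ * (1 / 2) ^ j / δ := by
  rw [norm_div, norm_mul]
  have : δ ≤ ‖v - j‖ := by simpa using h j
  have e : ‖((1 : ℂ) / 2) ^ j‖ = (1 / 2) ^ j := by simp
  rw [e]
  gcongr

lemma summable_binSer {s v : ℂ} (hs : 0 < s.re) (hv : ∀ m : ℤ, v ≠ m) :
    Summable fun j : ℕ => bc s j * (1 / 2) ^ j / (v - j) := by
  obtain ⟨δ, hδ, h⟩ := exists_dist_int hv
  exact ((summable_bc hs).div_const δ).of_norm_bounded (fun j => norm_binSer_term_le hδ h j)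

/-- The recurrence which compensates the boundary terms at `u = 2` in `near_zero_rec`. -/
lemma binSer_rec {s v : ℂ} (hs : 0 < s.re) (hv : ∀ m : ℤ, v ≠ m) :
    (v + s) * binSer s v + 2 * (v + 1) * binSer s (v + 1) = 3 * (3 / 2 : ℂ) ^ (-s) := by
  have hv' : ∀ m : ℤ, v + 1 ≠ m := fun m h => hv (m - 1) (by push_cast; rw [← h]; ring)
  have hvj : ∀ j : ℕ, v - j ≠ 0 := fun j h => hv j (by push_cast; linear_combination h)
  have hvj' : ∀ j : ℕ, v + 1 - j ≠ 0 := fun j h => hv' j (by push_cast; linear_combination h)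
  have hp := hasSum_binom hs (q := 1 / 2) (by norm_num)
  rw [show (1 : ℂ) + 1 / 2 = 3 / 2 by norm_num] at hp
  have h1 := ((summable_binSer hs hv).hasSum.mul_left (v + s)).sub hp
  have h2 := ((summable_binSer hs hv').hasSum.mul_left (2 * (v + 1))).sub (hp.mul_left 2)
  rw [← hasSum_nat_add_iff' 1] at h2
  have h3 := h2.unique (h1.neg.congr_fun fun j => ?_)
  · have h0 : bc s 0 = 1 := by simp [bc, Gamma_ne_zero_of_re_pos hs]
    have hv1 : v + 1 ≠ 0 := by simpa using hvj' 0
    rw [Finset.sum_range_one] at h3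
    change (2 * (v + 1) * binSer s (v + 1) - 2 * _) - _ = -((v + s) * binSer s v - _) at h3
    simp [h0, hv1] at h3
    linear_combination h3
  · have hr := bc_rec hs j
    have a1 := hvj j
    have a2 := hvj' (j + 1)
    push_cast at a2 ⊢
    rw [show v + 1 - ((j : ℂ) + 1) = v - j by ring, pow_succ]
    field_simp
    linear_combination hr

lemma cpow_sub_one_mul {u : ℝ} (hu : 0 < u) (A : ℂ) :
    (u : ℂ) ^ A = (u : ℂ) ^ (A - 1) * u := by
  have hu0 : (u : ℂ) ≠ 0 := by exact_mod_cast hu.ne'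
  rw [cpow_sub _ _ hu0, cpow_one]; field_simp

lemma integrableOn_near_zero {s A : ℂ} (hs : -1 < s.re) (hA : -1 < A.re) :
    IntegrableOn (fun u : ℝ => ((1 + (u : ℂ)) ^ (-s) - 1) * (u : ℂ) ^ (A - 1)) (Ioc 0 2) := by
  have h : IntegrableOn (fun u : ℝ => ‖s‖ * u ^ A.re) (Ioc 0 2) := by
    rw [← intervalIntegrable_iff_integrableOn_Ioc_of_le (by norm_num)]
    exact (intervalIntegral.intervalIntegrable_rpow' hA).const_mul _
  refine Integrable.mono' h ?_ ?_
  · refine ContinuousOn.aestronglyMeasurable ?_ measurableSet_Ioc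
    exact (((continuousOn_one_add_cpow s).sub continuousOn_const).mul
      (continuousOn_cpow le_rfl _)).mono Ioc_subset_Ioi_self
  · filter_upwards [ae_restrict_mem measurableSet_Ioc] with u hu
    have hu0 : 0 < u := hu.1
    rw [norm_mul, norm_cpow_eq_rpow_re_of_pos hu0]
    have h1 := norm_one_add_cpow_sub_le hs hu0.le
    calc ‖(1 + (u : ℂ)) ^ (-s) - 1‖ * u ^ (A - 1).re ≤ (‖s‖ * u) * u ^ (A - 1).re := by gcongr
      _ = ‖s‖ * u ^ A.re := by
        rw [mul_assoc, mul_comm u, sub_re, one_re, Real.rpow_sub_one hu0.ne']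
        field_simp

/-- The analytic continuation in `A` of `∫₀^∞ u^(A-1) (1 + u)^(-s) du`, obtained by cutting at
`u = 2`, subtracting the leading term at `0` and expanding in powers of `1/u` at infinity. -/
def regBeta (s A : ℂ) : ℂ :=
  (∫ u in Ioc (0 : ℝ) 2, ((1 + (u : ℂ)) ^ (-s) - 1) * (u : ℂ) ^ (A - 1)) + (2 : ℂ) ^ A / A -
    (2 : ℂ) ^ (A - s) * binSer s (A - s)

/-- Integration of the derivative of `u^A ((1 + u)^(1 - s) - 1)` over `(0, 2]`. -/
lemma near_zero_rec {s A : ℂ} (hs : 0 < s.re) (hA : -1 < A.re) (hA0 : ∀ m : ℤ, A ≠ m) :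
    A * ((∫ u in Ioc (0 : ℝ) 2, ((1 + (u : ℂ)) ^ (-s) - 1) * (u : ℂ) ^ (A - 1)) + (2 : ℂ) ^ A / A) +
      (A + 1 - s) * ((∫ u in Ioc (0 : ℝ) 2, ((1 + (u : ℂ)) ^ (-s) - 1) * (u : ℂ) ^ (A + 1 - 1)) +
        (2 : ℂ) ^ (A + 1) / (A + 1)) = (2 : ℂ) ^ A * (3 : ℂ) ^ (1 - s) := by
  have hA1 : A ≠ 0 := by simpa using hA0 0
  have hA2 : A + 1 ≠ 0 := fun h => hA0 (-1) (by push_cast; linear_combination h)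
  have i1 := integrableOn_near_zero (s := s) (A := A) (by linarith) hA
  have i2 := integrableOn_near_zero (s := s) (A := A + 1) (by linarith) (by simp; linarith)
  have i3 : IntegrableOn (fun u : ℝ => (u : ℂ) ^ A) (Ioc 0 2) := by
    rw [← intervalIntegrable_iff_integrableOn_Ioc_of_le (by norm_num)]
    exact intervalIntegral.intervalIntegrable_cpow' hA
  have e3 := integral_cpow (a := 0) (b := 2) (r := A) (Or.inl hA)
  rw [intervalIntegral.integral_of_le (by norm_num)] at e3
  have hder : ∀ u ∈ Ioo (0 : ℝ) 2, HasDerivAt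
      (fun u : ℝ => (u : ℂ) ^ A * ((1 + (u : ℂ)) ^ (-(s - 1)) - 1))
      (A * (((1 + (u : ℂ)) ^ (-s) - 1) * (u : ℂ) ^ (A - 1)) +
        (A + 1 - s) * (((1 + (u : ℂ)) ^ (-s) - 1) * (u : ℂ) ^ (A + 1 - 1)) +
        (A + 1 - s) * (u : ℂ) ^ A) u := by
    intro u hu
    have hu0 := hu.1
    have d1 := hasDerivAt_ofReal_cpow_const hu0.ne' hA1
    have d2 : HasDerivAt (fun z : ℂ => (1 + z) ^ (-(s - 1)) - 1)
        (-(s - 1) * (1 + (u : ℂ)) ^ (-(s - 1) - 1) * 1) (u : ℂ) :=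
      (((hasDerivAt_id (u : ℂ)).const_add 1).cpow_const
        (Or.inl (by simp; linarith))).sub_const 1
    refine (d1.mul d2.comp_ofReal).congr_deriv ?_
    have h1u : (1 + (u : ℂ)) ≠ 0 := by
      have : (1 + u) ≠ 0 := by linarith
      exact_mod_cast this
    rw [show -(s - 1) - 1 = -s by ring, show -(s - 1) = 1 + -s by ring, cpow_add _ _ h1u, cpow_one,
      show A + 1 - 1 = A by ring, cpow_sub_one_mul hu0 A]
    ring
  have hlim0 : Tendsto (fun u : ℝ => (u : ℂ) ^ A * ((1 + (u : ℂ)) ^ (-(s - 1)) - 1))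
      (𝓝[>] 0) (𝓝 0) := by
    have ht : Tendsto (fun u : ℝ => ‖s - 1‖ * u ^ (A.re + 1)) (𝓝[>] 0) (𝓝 0) := by
      have := (Real.continuousAt_rpow_const 0 (A.re + 1) (Or.inr (by linarith))).tendsto
      rw [Real.zero_rpow (by linarith)] at this
      simpa using (this.mono_left nhdsWithin_le_nhds).const_mul ‖s - 1‖
    refine squeeze_zero_norm' ?_ ht
    filter_upwards [self_mem_nhdsWithin] with u hu
    have hu0 : 0 < u := hu
    rw [norm_mul, norm_cpow_eq_rpow_re_of_pos hu0]
    have h1 := norm_one_add_cpow_sub_le (s := s - 1) (by simp; linarith) hu0.le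
    calc u ^ A.re * ‖(1 + (u : ℂ)) ^ (-(s - 1)) - 1‖ ≤ u ^ A.re * (‖s - 1‖ * u) := by gcongr
      _ = ‖s - 1‖ * u ^ (A.re + 1) := by rw [Real.rpow_add_one hu0.ne']; ring
  have hlim2 : Tendsto (fun u : ℝ => (u : ℂ) ^ A * ((1 + (u : ℂ)) ^ (-(s - 1)) - 1))
      (𝓝[<] 2) (𝓝 (((2 : ℝ) : ℂ) ^ A * ((1 + ((2 : ℝ) : ℂ)) ^ (-(s - 1)) - 1))) := by
    have : ContinuousOn (fun u : ℝ => (u : ℂ) ^ A * ((1 + (u : ℂ)) ^ (-(s - 1)) - 1)) (Ioi 0) :=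
      (continuousOn_cpow le_rfl _).mul ((continuousOn_one_add_cpow _).sub continuousOn_const)
    exact (this.continuousAt (Ioi_mem_nhds (by norm_num : (0 : ℝ) < 2))).tendsto.mono_left
      nhdsWithin_le_nhds
  have i12 : IntegrableOn (fun u : ℝ => A * (((1 + (u : ℂ)) ^ (-s) - 1) * (u : ℂ) ^ (A - 1)) +
      (A + 1 - s) * (((1 + (u : ℂ)) ^ (-s) - 1) * (u : ℂ) ^ (A + 1 - 1))) (Ioc 0 2) :=
    (i1.const_mul A).add (i2.const_mul (A + 1 - s))
  have hInt := i12.add (i3.const_mul (A + 1 - s))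
  have hF := intervalIntegral.integral_eq_sub_of_hasDerivAt_of_tendsto (by norm_num) hder
    ((intervalIntegrable_iff_integrableOn_Ioc_of_le (by norm_num)).2 hInt) hlim0 hlim2
  rw [intervalIntegral.integral_of_le (by norm_num),
    integral_add i12 (i3.const_mul (A + 1 - s)),
    integral_add (i1.const_mul A) (i2.const_mul (A + 1 - s)), integral_const_mul,
    integral_const_mul, integral_const_mul, e3, ofReal_zero, zero_cpow hA2] at hF
  push_cast at hF
  rw [show (1 : ℂ) + 2 = 3 by norm_num, show -(s - 1) = 1 - s by ring] at hF
  have : A * ((2 : ℂ) ^ A / A) = 2 ^ A := by field_simp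
  linear_combination hF + this

/-- `regBeta` satisfies the functional equation of `Γ(A) Γ(s - A)`. -/
lemma regBeta_rec {s A : ℂ} (hs : 0 < s.re) (hA : -1 < A.re) (hA0 : ∀ m : ℤ, A ≠ m)
    (hAs : ∀ m : ℤ, A - s ≠ m) : A * regBeta s A = (s - A - 1) * regBeta s (A + 1) := by
  have h1 := near_zero_rec hs hA hA0
  have h2 := binSer_rec hs hAs
  have h3 : (2 : ℂ) ^ (A - s) * (3 * (3 / 2 : ℂ) ^ (-s)) = 2 ^ A * 3 ^ (1 - s) := by
    have : (3 / 2 : ℂ) ^ (-s) = 3 ^ (-s) * 2 ^ s := by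
      have e : (3 / 2 : ℂ) = ((3 : ℝ) : ℂ) * ((2⁻¹ : ℝ) : ℂ) := by push_cast; ring
      rw [e, mul_cpow_ofReal_nonneg (by norm_num) (by norm_num)]
      push_cast
      rw [inv_cpow _ _ (by
        rw [show (2 : ℂ) = ((2 : ℝ) : ℂ) by norm_num, arg_ofReal_of_nonneg (by norm_num)]
        exact Real.pi_pos.ne), cpow_neg _ s, cpow_neg _ s, inv_inv]
    rw [this, sub_eq_add_neg (1 : ℂ), cpow_add 1 (-s) (by norm_num), cpow_one,
      cpow_sub _ _ (by norm_num)]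
    have : (2 : ℂ) ^ s ≠ 0 := by simp [cpow_eq_zero_iff]
    field_simp
  have h4 : (2 : ℂ) ^ (A + 1 - s) = 2 * 2 ^ (A - s) := by
    rw [show A + 1 - s = 1 + (A - s) by ring, cpow_add _ _ (by norm_num), cpow_one]
  rw [regBeta, regBeta, h4, show A + 1 - s = A - s + 1 by ring]
  rw [show A - s + s = A by ring] at h2
  linear_combination h1 - (2 : ℂ) ^ (A - s) * h2 - h3

lemma regBeta_base {s A : ℂ} (hA : 0 < A.re) (hAs : A.re < s.re) :
    regBeta s A = Gamma A * Gamma (s - A) / Gamma s := by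
  obtain ⟨hI, hg⟩ := beta_Ioi hA hAs
  have hs : 0 < s.re := hA.trans hAs
  have hA0 : A ≠ 0 := by rintro rfl; simp at hA
  rw [← Ioc_union_Ioi_eq_Ioi (zero_le_two (α := ℝ))] at hg hI
  rw [setIntegral_union (Ioc_disjoint_Ioi le_rfl) measurableSet_Ioi hI.left_of_union
    hI.right_of_union] at hg
  rw [← hg, regBeta]
  have i3 : IntegrableOn (fun u : ℝ => (u : ℂ) ^ (A - 1)) (Ioc 0 2) := by
    rw [← intervalIntegrable_iff_integrableOn_Ioc_of_le (by norm_num)]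
    exact intervalIntegral.intervalIntegrable_cpow' (by simpa using hA)
  have e3 := integral_cpow (a := 0) (b := 2) (r := A - 1) (Or.inl (by simpa using hA))
  rw [intervalIntegral.integral_of_le (by norm_num), sub_add_cancel, ofReal_zero,
    zero_cpow hA0] at e3
  have n1 : (∫ u in Ioc (0 : ℝ) 2, ((1 + (u : ℂ)) ^ (-s) - 1) * (u : ℂ) ^ (A - 1)) =
      (∫ u in Ioc (0 : ℝ) 2, (u : ℂ) ^ (A - 1) * (1 + (u : ℂ)) ^ (-s)) - (2 : ℂ) ^ A / A := by
    rw [show (2 : ℂ) ^ A / A = ∫ u in Ioc (0 : ℝ) 2, (u : ℂ) ^ (A - 1) by rw [e3]; simp,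
      ← integral_sub hI.left_of_union i3]
    congr 1; ext u; ring
  have hvre : (A - s).re < 0 := by simp; linarith
  have hf : IntegrableOn (fun u : ℝ => (u : ℂ) ^ (A - s - 1)) (Ioi 2) :=
    integrableOn_Ioi_cpow_of_lt (by simp; linarith) (by norm_num)
  have key := hasSum_integral_mul (μ := volume.restrict (Ioi 2)) hf
    (g := fun j u => bc s j * ((u : ℂ)⁻¹) ^ j) (G := fun u => (1 + (u : ℂ)⁻¹) ^ (-s))
    (B := fun j => ‖bc s j‖ * (1 / 2) ^ j) (summable_bc hs)
    (fun m => by fun_prop) (fun m => ?_) ?_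
  · have n2 : (∫ u in Ioi (2 : ℝ), (u : ℂ) ^ (A - 1) * (1 + (u : ℂ)) ^ (-s)) =
        -((2 : ℂ) ^ (A - s) * binSer s (A - s)) := by
      rw [binSer, ← tsum_mul_left, ← tsum_neg]
      rw [show (∫ u in Ioi (2 : ℝ), (u : ℂ) ^ (A - 1) * (1 + (u : ℂ)) ^ (-s)) =
        ∫ u in Ioi (2 : ℝ), (u : ℂ) ^ (A - s - 1) * (1 + (u : ℂ)⁻¹) ^ (-s) from ?_, ← key.tsum_eq]
      · congr 1
        ext j
        have hj := j.cast_nonneg (α := ℝ)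
        have hi := integral_Ioi_cpow_of_lt (a := A - s - 1 - j) (c := 2)
          (by simp at hvre ⊢; linarith) (by norm_num)
        calc ∫ u in Ioi (2 : ℝ), (u : ℂ) ^ (A - s - 1) * (bc s j * ((u : ℂ)⁻¹) ^ j)
            = ∫ u in Ioi (2 : ℝ), bc s j * (u : ℂ) ^ (A - s - 1 - j) := by
              refine setIntegral_congr_fun measurableSet_Ioi fun u hu => ?_
              have hu0 : (u : ℂ) ≠ 0 := by
                have : (0 : ℝ) < u := zero_lt_two.trans hu
                exact_mod_cast this.ne'
              change (u : ℂ) ^ (A - s - 1) * (bc s j * ((u : ℂ)⁻¹) ^ j) = _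
              rw [cpow_sub _ (j : ℂ) hu0, cpow_natCast, inv_pow]
              ring
          _ = _ := by
              rw [integral_const_mul, hi, show A - s - 1 - (j : ℂ) + 1 = A - s - j by ring]
              push_cast
              rw [cpow_sub _ (j : ℂ) (by norm_num), cpow_natCast, one_div, inv_pow]
              ring
      · refine setIntegral_congr_fun measurableSet_Ioi fun u hu => ?_
        have hu : (0 : ℝ) < u := zero_lt_two.trans hu
        have hu0 : (u : ℂ) ≠ 0 := by exact_mod_cast hu.ne'
        change (u : ℂ) ^ (A - 1) * (1 + (u : ℂ)) ^ (-s) = _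
        rw [one_add_cpow_split hu, show A - s - 1 = (A - 1) + -s by ring, cpow_add _ _ hu0]
        ring
    rw [n1, n2]; ring
  · filter_upwards [ae_restrict_mem measurableSet_Ioi] with u hu
    have hu : 2 < u := hu
    rw [norm_mul, norm_pow, norm_inv, norm_real, Real.norm_of_nonneg (by linarith), one_div]
    gcongr
  · filter_upwards [ae_restrict_mem measurableSet_Ioi] with u hu
    have hu : 2 < u := hu
    refine hasSum_binom hs ?_
    rw [norm_inv, norm_real, Real.norm_of_nonneg (by linarith)]
    exact inv_lt_one_of_one_lt₀ (by linarith)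

lemma regBeta_pos {s : ℂ} (hs : 1 < s.re) (N : ℕ) : ∀ {A : ℂ} (_ : 0 < A.re) (_ : A.re ≤ N + 1)
    (_ : ∀ m : ℤ, A ≠ m) (_ : ∀ m : ℤ, A - s ≠ m),
    regBeta s A = Gamma A * Gamma (s - A) / Gamma s := by
  induction N with
  | zero =>
    intro A h1 h2 _ _
    refine regBeta_base h1 ?_
    simp at h2
    linarith
  | succ N ih =>
    intro A h1 h2 hA hAs
    by_cases h : A.re ≤ N + 1
    · exact ih h1 h hA hAs
    push Not at h
    have hN := N.cast_nonneg (α := ℝ)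
    have hA' : ∀ m : ℤ, A - 1 ≠ m := fun m h => hA (m + 1) (by push_cast; rw [← h]; ring)
    have hAs' : ∀ m : ℤ, A - 1 - s ≠ m := fun m h => hAs (m + 1) (by push_cast; rw [← h]; ring)
    have IH := ih (A := A - 1) (by simp; linarith) (by push_cast at h2; simp; linarith) hA' hAs'
    have hr := regBeta_rec (s := s) (A := A - 1) (by linarith) (by simp; linarith) hA' hAs'
    have hA0 : A - 1 ≠ 0 := by simpa using hA' 0
    have hsA : s - A ≠ 0 := fun h => hAs 0 (by push_cast; linear_combination -h)
    rw [IH, show s - (A - 1) - 1 = s - A by ring, sub_add_cancel,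
      show s - (A - 1) = (s - A) + 1 by ring, Gamma_add_one _ hsA] at hr
    have hG : Gamma A = (A - 1) * Gamma (A - 1) := by
      rw [← Gamma_add_one _ hA0, sub_add_cancel]
    apply mul_left_cancel₀ hsA
    rw [← hr, hG]
    ring

/-- The functional equation moves `A` into the strip `0 < Re A < Re s` of `regBeta_base`; the
hypothesis `Re s > 1` makes the strip wider than one. -/
lemma regBeta_eq {s A : ℂ} (hs : 1 < s.re) (hA1 : -1 < A.re) (hA : ∀ m : ℤ, A ≠ m)
    (hAs : ∀ m : ℤ, A - s ≠ m) :
    regBeta s A = Gamma A * Gamma (s - A) / Gamma s := by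
  obtain ⟨N, hN⟩ := exists_nat_gt A.re
  by_cases h : 0 < A.re
  · exact regBeta_pos hs N h (by linarith) hA hAs
  have hA' : ∀ m : ℤ, A + 1 ≠ m := fun m h => hA (m - 1) (by push_cast; rw [← h]; ring)
  have hAs' : ∀ m : ℤ, A + 1 - s ≠ m := fun m h => hAs (m - 1) (by push_cast; rw [← h]; ring)
  have IH := regBeta_pos (A := A + 1) hs 0 (by simp; linarith) (by simp; linarith) hA' hAs'
  have hr := regBeta_rec (by linarith) hA1 hA hAs
  have hA0 : A ≠ 0 := by simpa using hA 0
  have hsA : s - (A + 1) ≠ 0 := fun h => hAs (-1) (by push_cast; linear_combination -h)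
  have hG : Gamma (s - A) = (s - (A + 1)) * Gamma (s - (A + 1)) := by
    rw [← Gamma_add_one _ hsA]; congr 1; ring
  apply mul_left_cancel₀ hA0
  rw [hr, IH, hG, Gamma_add_one _ hA0]
  ring

/-! ### The two halves of the integral and their recombination -/

/-- Coefficients of the power series `cos (y t) = ∑ cc y m * t ^ (2 * m)`. -/
def cc (y : ℝ) (m : ℕ) : ℂ := (-1) ^ m * (y : ℂ) ^ (2 * m) / ((2 * m).factorial : ℂ)

/-- The integral over `x > 2` of `x^(-v-1) cos (y x^(1/n))`. -/
def farCos (n : ℕ) (y : ℝ) (v : ℂ) : ℂ :=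
  ∫ x in Ioi (2 : ℝ), (x : ℂ) ^ (-v - 1) * (Real.cos (y * x ^ ((1 : ℝ) / n)) : ℂ)

/-- The finite part at `0` of `∫₀^∞ x^(-v-1) cos (y x^(1/n)) dx`. -/
def mellinCos (n : ℕ) (y : ℝ) (v : ℂ) : ℂ :=
  n * (y : ℂ) ^ (n * v) * Gamma (-(n * v)) * Complex.sin (Real.pi * (n * v + 1) / 2)

/-- The substitution `x = t^n` reduces the claim to `tail_cos` with `w = n v + 1`. -/
lemma farCos_eq {n : ℕ} (hn : 0 < n) {y : ℝ} (hy : 0 < y) {v : ℂ} (hv : 0 < v.re)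
    (hnv : ∀ m : ℤ, n * v ≠ m) :
    farCos n y v = mellinCos n y v -
      ∑' m : ℕ, cc y m * (2 : ℂ) ^ (2 * m / n - v) / (2 * m / n - v) := by
  have hn' : (0 : ℝ) < n := by exact_mod_cast hn
  have hnc : (n : ℂ) ≠ 0 := by exact_mod_cast hn.ne'
  have hT : (0 : ℝ) < 2 ^ (n : ℝ)⁻¹ := by positivity
  have hsub := integral_comp_rpow_Ioi_of_pos' (p := n) (c := 2)
    (g := fun x : ℝ => (x : ℂ) ^ (-v - 1) * (Real.cos (y * x ^ ((1 : ℝ) / n)) : ℂ))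
    hn' zero_le_two
  rw [farCos, ← hsub]
  have ht := tail_cos (w := n * v + 1) (y := y) (T := 2 ^ (n : ℝ)⁻¹)
    (fun m h => hnv (m - 1) (by push_cast; rw [← h]; ring))
    (by simpa using mul_pos hn' hv) hy hT
  have hc2 : (((2 : ℝ) ^ (n : ℝ)⁻¹ : ℝ) : ℂ) = (2 : ℂ) ^ ((n : ℂ)⁻¹) := by
    rw [ofReal_cpow (by norm_num)]; push_cast; rfl
  calc ∫ x in Ioi ((2 : ℝ) ^ (n : ℝ)⁻¹), ((n : ℝ) * x ^ ((n : ℝ) - 1)) •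
          (((x ^ (n : ℝ) : ℝ) : ℂ) ^ (-v - 1) *
            (Real.cos (y * (x ^ (n : ℝ)) ^ ((1 : ℝ) / n)) : ℂ))
      = ∫ x in Ioi ((2 : ℝ) ^ (n : ℝ)⁻¹), (n : ℂ) *
          ((x : ℂ) ^ (-(n * v + 1)) * (Real.cos (y * x) : ℂ)) := by
        refine setIntegral_congr_fun measurableSet_Ioi fun x hx => ?_
        have hx0 : 0 < x := hT.trans hx
        have hxc : (x : ℂ) ≠ 0 := by exact_mod_cast hx0.ne'
        have e1 : (x ^ (n : ℝ)) ^ ((1 : ℝ) / n) = x := by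
          rw [← Real.rpow_mul hx0.le, mul_one_div_cancel hn'.ne', Real.rpow_one]
        have e2 : ((x ^ (n : ℝ) : ℝ) : ℂ) ^ (-v - 1) = (x : ℂ) ^ ((n : ℂ) * (-v - 1)) := by
          rw [cpow_def_of_ne_zero (ofReal_ne_zero.2 (Real.rpow_pos_of_pos hx0 _).ne'),
            cpow_def_of_ne_zero hxc, ← ofReal_log (by positivity), ← ofReal_log hx0.le,
            Real.log_rpow hx0]
          push_cast
          congr 1; ring
        have e3 : ((x ^ ((n : ℝ) - 1) : ℝ) : ℂ) = (x : ℂ) ^ ((n : ℂ) - 1) := by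
          rw [ofReal_cpow hx0.le]; push_cast; rfl
        simp only [e1, e2, real_smul, ofReal_mul, e3, ofReal_natCast]
        rw [show -((n : ℂ) * v + 1) = ((n : ℂ) - 1) + n * (-v - 1) by ring, cpow_add _ _ hxc]
        ring
    _ = _ := by
        rw [integral_const_mul, ht, mul_sub, mellinCos]
        congr 1
        · rw [show (1 : ℂ) - (n * v + 1) = -(n * v) by ring,
            show (n : ℂ) * v + 1 - 1 = n * v by ring]
          ring
        · rw [← mul_assoc, ← tsum_mul_left]
          congr 1; ext m
          have hd : (2 * m - n * v : ℂ) ≠ 0 := fun h =>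
            hnv (2 * m) (by push_cast; linear_combination -h)
          have hp : (2 : ℂ) ^ (2 * m / n - v) =
              (2 ^ ((n : ℂ)⁻¹)) ^ (1 - (n * v + 1)) * (2 ^ ((n : ℂ)⁻¹)) ^ (2 * m) := by
            rw [← hc2, ← cpow_natCast, ← cpow_add _ _ (ofReal_ne_zero.2 hT.ne'),
              cpow_def_of_ne_zero (ofReal_ne_zero.2 hT.ne'),
              cpow_def_of_ne_zero (by norm_num), ← ofReal_log hT.le, Real.log_rpow (by norm_num),
              show (2 : ℂ) = ((2 : ℝ) : ℂ) by norm_num, ← ofReal_log (by norm_num)]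
            push_cast
            congr 1; field_simp; ring
          rw [hp, hc2, cc, show (2 * m / n - v : ℂ) = (2 * m - n * v) / n by field_simp,
            show (2 * m + 1 - (n * v + 1) : ℂ) = 2 * m - n * v by ring, mul_pow]
          field_simp

lemma summable_cc (y R : ℝ) : Summable fun m => ‖cc y m‖ * R ^ (2 * m) := by
  refine (Real.hasSum_cosh (y * R)).summable.congr fun m => ?_
  have : ‖cc y m‖ = y ^ (2 * m) / (2 * m).factorial := by
    rw [cc]
    simp only [norm_mul, norm_div, norm_pow, norm_neg, norm_one, one_pow, one_mul, norm_real,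
      Real.norm_eq_abs, norm_natCast]
    rw [(even_two_mul m).pow_abs]
  rw [this, mul_pow]; ring

lemma hasSum_cc (y t : ℝ) : HasSum (fun m => cc y m * (t : ℂ) ^ (2 * m)) (Real.cos (y * t) : ℂ) := by
  have := Complex.hasSum_cos ((y * t : ℝ) : ℂ)
  rw [ofReal_cos]
  refine this.congr_fun fun m => ?_
  rw [cc]; push_cast; rw [mul_pow]; ring

lemma continuousOn_cos_rpow (n : ℕ) (y : ℝ) :
    ContinuousOn (fun x : ℝ => (Real.cos (y * x ^ ((1 : ℝ) / n)) : ℂ)) (Ioi 0) := by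
  refine continuous_ofReal.comp_continuousOn (Real.continuous_cos.comp_continuousOn ?_)
  exact continuousOn_const.mul (continuousOn_id.rpow_const fun x hx => Or.inl (ne_of_gt hx))

lemma norm_cos_le (t : ℝ) : ‖(Real.cos t : ℂ)‖ ≤ 1 := by
  rw [norm_real, Real.norm_eq_abs]; exact Real.abs_cos_le_one t

lemma integrable_mul_cos {n : ℕ} {y : ℝ} {f : ℝ → ℂ} {S : Set ℝ} (hS : S ⊆ Ioi 0)
    (hSm : MeasurableSet S) (hf : IntegrableOn f S) :
    IntegrableOn (fun x => f x * (Real.cos (y * x ^ ((1 : ℝ) / n)) : ℂ)) S :=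
  hf.mul_bdd (c := 1) (((continuousOn_cos_rpow n y).mono hS).aestronglyMeasurable hSm)
    (ae_of_all _ fun _ => norm_cos_le _)

lemma integrableOn_farCos {n : ℕ} {y : ℝ} {v : ℂ} (hv : 0 < v.re) :
    IntegrableOn (fun x : ℝ => (x : ℂ) ^ (-v - 1) * (Real.cos (y * x ^ ((1 : ℝ) / n)) : ℂ))
      (Ioi 2) :=
  integrable_mul_cos (Ioi_subset_Ioi zero_le_two) measurableSet_Ioi
    (integrableOn_Ioi_cpow_of_lt (by simp; linarith) (by norm_num))

/-- Termwise integration over `x > 2` of the expansion of `(1 + x)^(-s)` in powers of `1/x`. -/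
lemma hasSum_far {n : ℕ} {y : ℝ} {s v : ℂ} (hs : 0 < s.re) (hv : 0 < v.re) :
    IntegrableOn (fun x : ℝ => (1 + (x : ℂ)) ^ (-s) * (x : ℂ) ^ (-v - 1) *
        (Real.cos (y * x ^ ((1 : ℝ) / n)) : ℂ)) (Ioi 2) ∧
    HasSum (fun j : ℕ => bc s j * farCos n y (v + s + j))
      (∫ x in Ioi (2 : ℝ), (1 + (x : ℂ)) ^ (-s) * (x : ℂ) ^ (-v - 1) *
        (Real.cos (y * x ^ ((1 : ℝ) / n)) : ℂ)) := by
  have hvs : 0 < (v + s).re := by simp; linarith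
  have hf := integrableOn_farCos (n := n) (y := y) hvs
  have hbin : ∀ x ∈ Ioi (2 : ℝ),
      HasSum (fun j : ℕ => bc s j * ((x : ℂ)⁻¹) ^ j) ((1 + (x : ℂ)⁻¹) ^ (-s)) := by
    intro x hx
    have hx : 2 < x := hx
    refine hasSum_binom hs ?_
    rw [norm_inv, norm_real, Real.norm_of_nonneg (by linarith)]
    exact inv_lt_one_of_one_lt₀ (by linarith)
  have hle : ∀ (j : ℕ), ∀ x ∈ Ioi (2 : ℝ),
      ‖bc s j * ((x : ℂ)⁻¹) ^ j‖ ≤ ‖bc s j‖ * (1 / 2) ^ j := by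
    intro j x hx
    have hx : 2 < x := hx
    rw [norm_mul, norm_pow, norm_inv, norm_real, Real.norm_of_nonneg (by linarith), one_div]
    gcongr
  have key := hasSum_integral_mul (μ := volume.restrict (Ioi 2)) hf
    (g := fun j u => bc s j * ((u : ℂ)⁻¹) ^ j) (G := fun u => (1 + (u : ℂ)⁻¹) ^ (-s))
    (B := fun j => ‖bc s j‖ * (1 / 2) ^ j) (summable_bc hs)
    (fun m => by fun_prop)
    (fun m => by filter_upwards [ae_restrict_mem measurableSet_Ioi] with u hu using hle m u hu)
    (by filter_upwards [ae_restrict_mem measurableSet_Ioi] with u hu using hbin u hu)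
  have heq : EqOn (fun x : ℝ => (x : ℂ) ^ (-(v + s) - 1) *
        (Real.cos (y * x ^ ((1 : ℝ) / n)) : ℂ) * (1 + (x : ℂ)⁻¹) ^ (-s))
      (fun x : ℝ => (1 + (x : ℂ)) ^ (-s) * (x : ℂ) ^ (-v - 1) *
        (Real.cos (y * x ^ ((1 : ℝ) / n)) : ℂ)) (Ioi 2) := by
    intro x hx
    have hx0 : (0 : ℝ) < x := zero_lt_two.trans hx
    have hxc : (x : ℂ) ≠ 0 := by exact_mod_cast hx0.ne'
    simp only
    rw [one_add_cpow_split hx0, show -(v + s) - 1 = -s + (-v - 1) by ring, cpow_add _ _ hxc]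
    ring
  constructor
  · refine IntegrableOn.congr_fun ?_ heq measurableSet_Ioi
    refine hf.mul_bdd (c := ∑' j, ‖bc s j‖ * (1 / 2) ^ j) ?_ ?_
    · refine (Measurable.aestronglyMeasurable ?_)
      fun_prop
    · filter_upwards [ae_restrict_mem measurableSet_Ioi] with u hu
      rw [← (hbin u hu).tsum_eq]
      exact tsum_of_norm_bounded (summable_bc hs).hasSum (hle · u hu)
  · rw [← setIntegral_congr_fun measurableSet_Ioi heq]
    refine key.congr_fun fun j => ?_
    rw [farCos, ← integral_const_mul]
    refine setIntegral_congr_fun measurableSet_Ioi fun x hx => ?_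
    have hx0 : (0 : ℝ) < x := zero_lt_two.trans hx
    have hxc : (x : ℂ) ≠ 0 := by exact_mod_cast hx0.ne'
    rw [show -(v + s + j) - 1 = -(v + s) - 1 - (j : ℂ) by ring, cpow_sub _ (j : ℂ) hxc,
      cpow_natCast, inv_pow]
    ring

/-- Termwise integration over `0 < x ≤ 2` of the power series of the cosine. -/
lemma hasSum_near {n : ℕ} (hn : 0 < n) {y : ℝ} {s v : ℂ} (hs : 0 < s.re) (hv : v.re < 1) :
    IntegrableOn (fun x : ℝ => ((1 + (x : ℂ)) ^ (-s) - 1) * (x : ℂ) ^ (-v - 1) *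
        (Real.cos (y * x ^ ((1 : ℝ) / n)) : ℂ)) (Ioc 0 2) ∧
    HasSum (fun m : ℕ => cc y m *
        ∫ x in Ioc (0 : ℝ) 2, ((1 + (x : ℂ)) ^ (-s) - 1) * (x : ℂ) ^ ((2 * m / n - v) - 1))
      (∫ x in Ioc (0 : ℝ) 2, ((1 + (x : ℂ)) ^ (-s) - 1) * (x : ℂ) ^ (-v - 1) *
        (Real.cos (y * x ^ ((1 : ℝ) / n)) : ℂ)) := by
  have hn' : (0 : ℝ) < n := by exact_mod_cast hn
  have hf := integrableOn_near_zero (s := s) (A := -v) (by linarith) (by simp; linarith)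
  refine ⟨integrable_mul_cos Ioc_subset_Ioi_self measurableSet_Ioc hf, ?_⟩
  have key := hasSum_integral_mul (μ := volume.restrict (Ioc 0 2)) hf
    (g := fun m x => cc y m * ((x ^ ((1 : ℝ) / n) : ℝ) : ℂ) ^ (2 * m))
    (G := fun x => (Real.cos (y * x ^ ((1 : ℝ) / n)) : ℂ))
    (B := fun m => ‖cc y m‖ * (2 ^ ((1 : ℝ) / n)) ^ (2 * m)) (summable_cc y _)
    (fun m => ?_) (fun m => ?_) (ae_of_all _ fun x => hasSum_cc _ _)
  · refine key.congr_fun fun m => ?_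
    rw [← integral_const_mul]
    refine setIntegral_congr_fun measurableSet_Ioc fun x hx => ?_
    have hx0 : 0 < x := hx.1
    have hxc : (x : ℂ) ≠ 0 := by exact_mod_cast hx0.ne'
    have e : ((x ^ ((1 : ℝ) / n) : ℝ) : ℂ) ^ (2 * m) = (x : ℂ) ^ ((2 * m / n : ℂ)) := by
      rw [← ofReal_pow, ← Real.rpow_natCast, ← Real.rpow_mul hx0.le, ofReal_cpow hx0.le]
      push_cast
      congr 1; ring
    simp only [e]
    rw [show (2 * m / n - v - 1 : ℂ) = 2 * m / n + (-v - 1) by ring, cpow_add _ _ hxc]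
    ring
  · refine (Measurable.aestronglyMeasurable ?_)
    fun_prop
  · filter_upwards [ae_restrict_mem measurableSet_Ioc] with x hx
    have hx0 : 0 < x := hx.1
    rw [norm_mul, norm_pow, norm_real, Real.norm_of_nonneg (by positivity)]
    gcongr
    exact hx.2

/-- The doubly expanded boundary terms at `x = 2`, which cancel between the two halves:
`2m/n - (v + s + j)` is the exponent `Aₘ - s - j`. -/
def bdry (n : ℕ) (y : ℝ) (s v : ℂ) (m j : ℕ) : ℂ :=
  cc y m * bc s j * (2 : ℂ) ^ (2 * m / n - (v + s + j)) / (2 * m / n - (v + s + j))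

lemma summable_bdry {n : ℕ} (hn : 0 < n) {y : ℝ} {s v : ℂ} (hs : 0 < s.re)
    (hvs : ∀ m : ℤ, n * (v + s) ≠ m) :
    Summable fun p : ℕ × ℕ => bdry n y s v p.1 p.2 := by
  have hn' : (0 : ℝ) < n := by exact_mod_cast hn
  have hnc : (n : ℂ) ≠ 0 := by exact_mod_cast hn.ne'
  obtain ⟨δ, hδ, h⟩ := exists_dist_int hvs
  have hS := ((summable_cc y (2 ^ ((1 : ℝ) / n))).mul_of_nonneg (summable_bc hs)
    (fun m => by positivity) (fun j => by positivity)).mul_left ((2 : ℝ) ^ (-(v + s).re) * n / δ)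
  refine hS.of_norm_bounded fun p => ?_
  obtain ⟨m, j⟩ := p
  have e1 : ‖(2 : ℂ) ^ (2 * m / n - (v + s + j))‖ =
      2 ^ (-(v + s).re) * ((2 : ℝ) ^ ((1 : ℝ) / n)) ^ (2 * m) * (1 / 2) ^ j := by
    have : (2 * m / n - (v + s + j) : ℂ).re = -(v + s).re + 1 / n * (2 * m : ℕ) + -(j : ℝ) := by
      rw [show (2 * m / n : ℂ) = ((2 * m / n : ℝ) : ℂ) by push_cast; rfl]
      simp
      ring
    rw [show (2 : ℂ) = ((2 : ℝ) : ℂ) by norm_num] at this ⊢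
    rw [norm_cpow_eq_rpow_re_of_pos (by norm_num), this, Real.rpow_add (by norm_num),
      Real.rpow_add (by norm_num), Real.rpow_mul (by norm_num), Real.rpow_natCast,
      Real.rpow_neg (by norm_num) (j : ℝ), Real.rpow_natCast, one_div, one_div, inv_pow]
  have e2 : δ / n ≤ ‖(2 * m / n - (v + s + j) : ℂ)‖ := by
    have := h (2 * m - n * j)
    rw [div_le_iff₀ hn']
    have e : ‖(n : ℂ) * (v + s) - ((2 * m - n * j : ℤ) : ℂ)‖ =
        ‖(2 * m / n - (v + s + j) : ℂ)‖ * n := by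
      rw [← norm_neg, ← norm_natCast (α := ℂ) n, ← norm_mul]
      congr 1
      push_cast
      field_simp
      ring
    rwa [e] at this
  rw [bdry, norm_div, norm_mul, norm_mul, e1]
  calc _ ≤ ‖cc y m‖ * ‖bc s j‖ * (2 ^ (-(v + s).re) * ((2 : ℝ) ^ ((1 : ℝ) / n)) ^ (2 * m) *
        (1 / 2) ^ j) / (δ / n) := by gcongr
    _ = _ := by field_simp

/-- Each term of the first series is a far integral plus a column of boundary terms. -/
lemma bc_mul_mellinCos {n : ℕ} (hn : 0 < n) {y : ℝ} (hy : 0 < y) {s v : ℂ} (hs : 0 < s.re)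
    (hv0 : 0 < v.re) (hvs : ∀ m : ℤ, n * (v + s) ≠ m) (j : ℕ) :
    bc s j * mellinCos n y (v + s + j) =
    bc s j * farCos n y (v + s + j) + ∑' m, bdry n y s v m j := by
  rw [farCos_eq hn hy (v := v + s + j) (by simp; positivity) (fun m h => hvs (m - n * j) (by
    push_cast; rw [← h]; ring)), mul_sub, ← tsum_mul_left]
  rw [show (fun m => bdry n y s v m j) = fun m : ℕ => bc s j * (cc y m *
    2 ^ (2 * m / n - (v + s + j) : ℂ) / (2 * m / n - (v + s + j))) by ext m; rw [bdry]; ring]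
  ring

/-- Each term of the second series is a near integral, plus the boundary term of the subtracted
`1`, minus a row of boundary terms. -/
lemma cc_mul_beta {n : ℕ} (hn : 0 < n) {y : ℝ} {s v : ℂ} (hs : 1 < s.re)
    (hv1 : v.re < 1) (hv : ∀ m : ℤ, n * v ≠ m) (hvs : ∀ m : ℤ, n * (v + s) ≠ m) (m : ℕ) :
    cc y m * (Gamma (2 * m / n - v) * Gamma (s - (2 * m / n - v)) / Gamma s) =
    cc y m * (∫ x in Ioc (0 : ℝ) 2, ((1 + (x : ℂ)) ^ (-s) - 1) *
      (x : ℂ) ^ ((2 * m / n - v) - 1)) + cc y m * (2 : ℂ) ^ (2 * m / n - v) / (2 * m / n - v) -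
      ∑' j, bdry n y s v m j := by
  have hnc : (n : ℂ) ≠ 0 := by exact_mod_cast hn.ne'
  have hre : -1 < (2 * m / n - v : ℂ).re := by
    rw [show (2 * m / n : ℂ) = ((2 * m / n : ℝ) : ℂ) by push_cast; rfl]
    have : (0 : ℝ) ≤ 2 * m / n := by positivity
    rw [sub_re, ofReal_re]
    linarith
  rw [← regBeta_eq hs hre (fun l h => hv (2 * m - n * l) ?_)
    (fun l h => hvs (2 * m - n * l) ?_), regBeta, binSer]
  · have : ∑' j, bdry n y s v m j = cc y m * ((2 : ℂ) ^ (2 * m / n - v - s) *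
        ∑' j : ℕ, bc s j * (1 / 2) ^ j / (2 * m / n - v - s - j)) := by
      rw [← tsum_mul_left, ← tsum_mul_left]
      congr 1; ext j
      rw [bdry, show (2 * m / n - (v + s + j) : ℂ) = 2 * m / n - v - s - j by ring,
        cpow_sub _ (j : ℂ) (by norm_num), cpow_natCast, one_div, inv_pow]
      ring
    rw [this]; ring
  · push_cast; rw [← h]; field_simp; ring
  · push_cast; rw [← h]; field_simp; ring

/-- The evaluation with `n = k - 1` and `v = (s - 1) / n`. -/
theorem main_aux {n : ℕ} (hn : 0 < n) {y : ℝ} (hy : 0 < y) {s v : ℂ} (hs : 1 < s.re)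
    (hv0 : 0 < v.re) (hv1 : v.re < 1) (hv : ∀ m : ℤ, n * v ≠ m)
    (hvs : ∀ m : ℤ, n * (v + s) ≠ m) :
    (Summable fun j : ℕ => bc s j * mellinCos n y (v + s + j)) ∧
    (Summable fun m : ℕ => cc y m *
      (Gamma (2 * m / n - v) * Gamma (s - (2 * m / n - v)) / Gamma s)) ∧
    (∫ x in Ioi (0 : ℝ), ((1 + (x : ℂ)) ^ (-s) - 1) * (x : ℂ) ^ (-v - 1) *
        (Real.cos (y * x ^ ((1 : ℝ) / n)) : ℂ)) =
      (∑' j : ℕ, bc s j * mellinCos n y (v + s + j)) +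
      (∑' m : ℕ, cc y m * (Gamma (2 * m / n - v) * Gamma (s - (2 * m / n - v)) / Gamma s)) -
      mellinCos n y v := by
  have hs0 : 0 < s.re := by linarith
  have hn' : (0 : ℝ) < n := by exact_mod_cast hn
  have hnc : (n : ℂ) ≠ 0 := by exact_mod_cast hn.ne'
  obtain ⟨iF, hF⟩ := hasSum_far (n := n) (y := y) hs0 hv0
  obtain ⟨iN, hN⟩ := hasSum_near hn (y := y) hs0 hv1
  have hB := summable_bdry hn (y := y) hs0 hvs
  have hBs : Summable fun p : ℕ × ℕ => bdry n y s v p.2 p.1 :=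
    (Equiv.prodComm ℕ ℕ).summable_iff.2 hB
  -- the slice `j = 0` of the double series with `v - s` in place of `v`
  have hE : Summable fun m : ℕ => cc y m * (2 : ℂ) ^ (2 * m / n - v) / (2 * m / n - v) := by
    have h := summable_bdry hn (y := y) hs0 (v := v - s) (by simpa using hv)
    have h0 : bc s 0 = 1 := by simp [bc, Gamma_ne_zero_of_re_pos hs0]
    have hi : Function.Injective fun m : ℕ => (m, 0) := fun a b hab => by simpa using hab
    refine (h.comp_injective hi).congr fun m => ?_
    simp [bdry, h0]
  have hj := bc_mul_mellinCos hn hy hs0 hv0 hvs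
  have hm := cc_mul_beta hn (y := y) hs hv1 hv hvs
  have sj : Summable fun j : ℕ => bc s j * mellinCos n y (v + s + j) :=
    (hF.summable.add hBs.prod).congr fun j => (hj j).symm
  have sm : Summable fun m : ℕ => cc y m *
      (Gamma (2 * m / n - v) * Gamma (s - (2 * m / n - v)) / Gamma s) :=
    ((hN.summable.add hE).sub hB.prod).congr fun m => (hm m).symm
  refine ⟨sj, sm, ?_⟩
  have iV := integrableOn_farCos (n := n) (y := y) hv0
  have split : ∀ x : ℝ, ((1 + (x : ℂ)) ^ (-s) - 1) * (x : ℂ) ^ (-v - 1) *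
        (Real.cos (y * x ^ ((1 : ℝ) / n)) : ℂ) =
      (1 + (x : ℂ)) ^ (-s) * (x : ℂ) ^ (-v - 1) * (Real.cos (y * x ^ ((1 : ℝ) / n)) : ℂ) -
      (x : ℂ) ^ (-v - 1) * (Real.cos (y * x ^ ((1 : ℝ) / n)) : ℂ) := fun x => by ring
  have iF' : IntegrableOn (fun x : ℝ => ((1 + (x : ℂ)) ^ (-s) - 1) * (x : ℂ) ^ (-v - 1) *
        (Real.cos (y * x ^ ((1 : ℝ) / n)) : ℂ)) (Ioi 2) := by
    simp only [split]; exact iF.sub iV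
  rw [← Ioc_union_Ioi_eq_Ioi (zero_le_two (α := ℝ)),
    setIntegral_union (Ioc_disjoint_Ioi le_rfl) measurableSet_Ioi iN iF', ← hN.tsum_eq]
  have e2 : (∫ x in Ioi (2 : ℝ), ((1 + (x : ℂ)) ^ (-s) - 1) * (x : ℂ) ^ (-v - 1) *
        (Real.cos (y * x ^ ((1 : ℝ) / n)) : ℂ)) =
      (∑' j : ℕ, bc s j * farCos n y (v + s + j)) - farCos n y v := by
    simp only [split]
    rw [integral_sub iF iV, hF.tsum_eq, farCos]
  have hcomm : ∑' (j : ℕ) (m : ℕ), bdry n y s v m j = ∑' (m : ℕ) (j : ℕ), bdry n y s v m j :=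
    Summable.tsum_comm (f := fun m j => bdry n y s v m j) hB
  rw [e2, farCos_eq hn hy hv0 hv, tsum_congr hj, tsum_congr hm,
    hF.summable.tsum_add hBs.prod, (hN.summable.add hE).tsum_sub hB.prod,
    hN.summable.tsum_add hE, hcomm]
  ring

end MeijerSeries

theorem integral_evaluation_meijerG_series (k : ℕ) (hk : 2 ≤ k) (y : ℝ) (hy : 0 < y)
    (s : ℂ) (hs1 : 1 < s.re) (hs3 : s.re < 3) (hk2 : k = 2 → s.re < 2)
    (hsZ : ∀ m : ℤ, s ≠ (m : ℂ)) (hksZ : ∀ m : ℤ, (k : ℂ) * s ≠ (m : ℂ)) :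
    Summable (fun j : ℕ =>
      ‖(-(y : ℂ) ^ (k - 1)) ^ j / (Nat.factorial j : ℂ) * Complex.Gamma ((j : ℂ) + s) *
        Complex.Gamma (1 + (j : ℂ) - (k : ℂ) * (s + (j : ℂ))) *
        Complex.sin ((Real.pi : ℂ) / 2 * ((k : ℂ) * s + ((k : ℂ) - 1) * (j : ℂ)))‖) ∧
    Summable (fun m : ℕ =>
      ‖(-1 : ℂ) ^ m * (y : ℂ) ^ (2 * m) / (Nat.factorial (2 * m) : ℂ) *
        Complex.Gamma ((1 + 2 * (m : ℂ) - s) / ((k : ℂ) - 1)) *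
        Complex.Gamma (((k : ℂ) * s - 2 * (m : ℂ) - 1) / ((k : ℂ) - 1))‖) ∧
    (∫ x in Set.Ioi (0 : ℝ),
        ((1 + (x : ℂ)) ^ (-s) - 1) * (x : ℂ) ^ ((s + (k : ℂ) - 2) / (1 - (k : ℂ))) *
          (Real.cos (y * x ^ ((1 : ℝ) / ((k : ℝ) - 1))) : ℂ))
      = ((k : ℂ) - 1) * (y : ℂ) ^ ((k : ℂ) * s - 1) / Complex.Gamma s *
          (∑' j : ℕ,
            (-(y : ℂ) ^ (k - 1)) ^ j / (Nat.factorial j : ℂ) * Complex.Gamma ((j : ℂ) + s) *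
              Complex.Gamma (1 + (j : ℂ) - (k : ℂ) * (s + (j : ℂ))) *
              Complex.sin ((Real.pi : ℂ) / 2 * ((k : ℂ) * s + ((k : ℂ) - 1) * (j : ℂ))))
        + 1 / Complex.Gamma s *
          (∑' m : ℕ,
            (-1 : ℂ) ^ m * (y : ℂ) ^ (2 * m) / (Nat.factorial (2 * m) : ℂ) *
              Complex.Gamma ((1 + 2 * (m : ℂ) - s) / ((k : ℂ) - 1)) *
              Complex.Gamma (((k : ℂ) * s - 2 * (m : ℂ) - 1) / ((k : ℂ) - 1)))
        - ((k : ℂ) - 1) * (y : ℂ) ^ (s - 1) * Complex.Gamma (1 - s) *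
            Complex.sin ((Real.pi : ℂ) * s / 2) := by
  obtain ⟨n, rfl⟩ : ∃ n, k = n + 1 := ⟨k - 1, by omega⟩
  have hn : 0 < n := by omega
  have hn' : (0 : ℝ) < n := by exact_mod_cast hn
  have hnc : (n : ℂ) ≠ 0 := by exact_mod_cast hn.ne'
  have hyc : (y : ℂ) ≠ 0 := by exact_mod_cast hy.ne'
  have hG : Complex.Gamma s ≠ 0 := Complex.Gamma_ne_zero_of_re_pos (by linarith)
  obtain ⟨v, hv⟩ : ∃ v : ℂ, v = (s - 1) / n := ⟨_, rfl⟩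
  have hnv : (n : ℂ) * v = s - 1 := by rw [hv]; field_simp
  have hre : n * v.re = s.re - 1 := by simpa using congrArg Complex.re hnv
  have hv0 : 0 < v.re := by
    by_contra h
    nlinarith
  have hv1 : v.re < 1 := by
    have : s.re - 1 < n := by
      rcases (show n = 1 ∨ 2 ≤ n by omega) with h | h
      · have := hk2 (by omega)
        rw [h]; push_cast; linarith
      · have : (2 : ℝ) ≤ n := by exact_mod_cast h
        linarith
    by_contra h
    nlinarith
  obtain ⟨h1, h2, h3⟩ := MeijerSeries.main_aux hn hy hs1 hv0 hv1
    (fun m h => hsZ (m + 1) (by push_cast; linear_combination h - hnv))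
    (fun m h => hksZ (m + 1) (by push_cast; linear_combination h - hnv))
  push_cast at *
  simp only [add_sub_cancel_right] at *
  have t1 : ∀ j : ℕ, MeijerSeries.bc s j * MeijerSeries.mellinCos n y (v + s + j) =
      (n : ℂ) * (y : ℂ) ^ (((n : ℂ) + 1) * s - 1) / Complex.Gamma s *
      ((-(y : ℂ) ^ n) ^ j / (Nat.factorial j : ℂ) * Complex.Gamma ((j : ℂ) + s) *
        Complex.Gamma (1 + (j : ℂ) - ((n : ℂ) + 1) * (s + (j : ℂ))) *
        Complex.sin ((Real.pi : ℂ) / 2 * (((n : ℂ) + 1) * s + (n : ℂ) * (j : ℂ)))) := by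
    intro j
    have e : (n : ℂ) * (v + s + j) = (((n : ℂ) + 1) * s - 1) + (n * j : ℕ) := by
      push_cast; linear_combination hnv
    rw [MeijerSeries.bc, MeijerSeries.mellinCos, e, Complex.cpow_add _ _ hyc,
      Complex.cpow_natCast, neg_pow (_ ^ n), ← pow_mul]
    push_cast
    rw [show -((((n : ℂ) + 1) * s - 1) + n * j) = 1 + (j : ℂ) - ((n : ℂ) + 1) * (s + j) by ring,
      show (Real.pi : ℂ) * (((n : ℂ) + 1) * s - 1 + n * j + 1) / 2 =
        Real.pi / 2 * (((n : ℂ) + 1) * s + n * j) by ring]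
    field_simp
  have t2 : ∀ m : ℕ, MeijerSeries.cc y m * (Complex.Gamma (2 * m / n - v) *
      Complex.Gamma (s - (2 * m / n - v)) / Complex.Gamma s) =
      1 / Complex.Gamma s *
      ((-1 : ℂ) ^ m * (y : ℂ) ^ (2 * m) / (Nat.factorial (2 * m) : ℂ) *
        Complex.Gamma ((1 + 2 * (m : ℂ) - s) / (n : ℂ)) *
        Complex.Gamma ((((n : ℂ) + 1) * s - 2 * (m : ℂ) - 1) / (n : ℂ))) := by
    intro m
    rw [show (2 * m / n - v : ℂ) = (1 + 2 * (m : ℂ) - s) / n by rw [hv]; field_simp; ring,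
      show s - (1 + 2 * (m : ℂ) - s) / n = (((n : ℂ) + 1) * s - 2 * (m : ℂ) - 1) / n by
        field_simp; ring, MeijerSeries.cc]
    ring
  have t3 : MeijerSeries.mellinCos n y v = n * (y : ℂ) ^ (s - 1) * Complex.Gamma (1 - s) *
      Complex.sin ((Real.pi : ℂ) * s / 2) := by
    rw [MeijerSeries.mellinCos, hnv, sub_add_cancel, neg_sub]
  simp only [t1, t2, t3, tsum_mul_left] at h1 h2 h3
  have hexp : (s + ((n : ℂ) + 1) - 2) / (1 - ((n : ℂ) + 1)) = -v - 1 := by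
    rw [hv, show (1 : ℂ) - (n + 1) = -n by ring]; field_simp; ring
  have hc : (n : ℂ) * (y : ℂ) ^ (((n : ℂ) + 1) * s - 1) / Complex.Gamma s ≠ 0 := by
    simp [hnc, hG, hyc, Complex.cpow_eq_zero_iff]
  rw [hexp]
  refine ⟨?_, ?_, h3⟩
  · exact ((summable_mul_left_iff hc).1 h1).norm
  · exact ((summable_mul_left_iff (one_div_ne_zero hG)).1 h2).norm
end
end

section
/- Let k ≥ 2 be an integer, u > 0 and y > 0 real numbers, and ν, s ∈ ℂ with 0 < Re(s) < 1 + (k−1)Re(ν). Then the improper integral ∫_0^∞ t^{s−1} cos(yt) (u^{k−1} + t^{k−1})^{−ν} dt converges; that is, the limit as M → ∞ of ∫_0^M t^{s−1} cos(yt) (u^{k−1} + t^{k−1})^{−ν} dt exists in ℂ (the integrand being integrable on (0, M) for each M since Re(s) > 0). -/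
/-!
Write `m = k - 1` and `g t = t ^ (s - 1) * (u ^ m + t ^ m) ^ (-ν)`, so that the integrand is
`g t * cos (y t)`. Near `0` it is integrable because `0 < Re s`. On `[1, ∞)` one integrates by parts:
`g t * cos (y t)` is the derivative of `g t * sin (y t) / y` minus `g' t * sin (y t) / y`.
Since `u ^ m + t ^ m` is comparable with `t ^ m` for `1 ≤ t`
(`rpow_neg_add_pow_le`), `g t = O(t ^ e)` and `g' t = O(t ^ (e - 1))` with
`e = Re s - 1 - m * Re ν < 0`. Hence the boundary term tends to `0` and the remaining integral
converges absolutely.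
-/

open MeasureTheory Filter Topology Set

lemma hasDerivAt_ofReal_cpow {p : ℝ → ℝ} {p' t : ℝ} (c : ℂ) (hp : HasDerivAt p p' t)
    (h0 : 0 < p t) :
    HasDerivAt (fun t : ℝ => (p t : ℂ) ^ c) (c * (p t : ℂ) ^ (c - 1) * p') t := by
  have h1 : HasDerivAt (fun z : ℂ => z ^ c) (c * (p t : ℂ) ^ (c - 1) * 1) (p t : ℂ) :=
    (hasDerivAt_id (p t : ℂ)).cpow_const (Or.inl (by simpa using h0))
  have h2 := h1.comp_ofReal.scomp t hp
  refine h2.congr_deriv ?_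
  simp [mul_comm]

/-- For `1 ≤ t`, `t ^ m ≤ u ^ m + t ^ m ≤ (1 + u ^ m) t ^ m`; the two terms of the constant
serve the two signs of the exponent `a`. -/
lemma rpow_neg_add_pow_le {u t : ℝ} (m : ℕ) (a : ℝ) (hu : 0 < u) (ht : 1 ≤ t) :
    (u ^ m + t ^ m) ^ (-a) ≤ (1 + (1 + u ^ m) ^ (-a)) * t ^ (-(m * a)) := by
  have ht0 : 0 < t := by linarith
  have hum : 0 < u ^ m := pow_pos hu m
  have htm : 1 ≤ t ^ m := one_le_pow₀ ht
  have hc : 0 ≤ (1 + u ^ m) ^ (-a) := by positivity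
  have he : (t ^ m) ^ (-a) = t ^ (-(m * a)) := by
    rw [← Real.rpow_natCast, ← Real.rpow_mul ht0.le]
    congr 1; ring
  have hp : 0 < t ^ (-(m * a)) := Real.rpow_pos_of_pos ht0 _
  rcases le_total 0 a with ha | ha
  · have h1 : (u ^ m + t ^ m) ^ (-a) ≤ (t ^ m) ^ (-a) :=
      Real.rpow_le_rpow_of_nonpos (by linarith) (by linarith) (by linarith)
    rw [he] at h1
    nlinarith
  · have h1 : (u ^ m + t ^ m) ^ (-a) ≤ ((1 + u ^ m) * t ^ m) ^ (-a) :=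
      Real.rpow_le_rpow (by linarith) (by nlinarith) (by linarith)
    rw [Real.mul_rpow (by linarith) (by linarith), he] at h1
    nlinarith

theorem cos_integral_converges (k : ℕ) (hk : 2 ≤ k) (u y : ℝ) (hu : 0 < u) (hy : 0 < y)
    (ν s : ℂ) (hs0 : 0 < s.re) (hs1 : s.re < 1 + ((k : ℝ) - 1) * ν.re) :
    ∃ L : ℂ, Filter.Tendsto (fun M : ℝ =>
        ∫ t in Set.Ioc (0 : ℝ) M,
          (t : ℂ) ^ (s - 1) * (Real.cos (y * t) : ℂ) *
            ((u ^ (k - 1) + t ^ (k - 1) : ℝ) : ℂ) ^ (-ν))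
      Filter.atTop (nhds L) := by
  obtain ⟨n, rfl⟩ : ∃ n, k = n + 2 := ⟨k - 2, by omega⟩
  have hm : n + 2 - 1 = n + 1 := by omega
  rw [hm]
  obtain ⟨e, he⟩ : ∃ e : ℝ, e = s.re - 1 - ((n + 1 : ℕ) : ℝ) * ν.re := ⟨_, rfl⟩
  have he0 : e < 0 := by
    push_cast at hs1 he
    linarith
  set B : ℝ → ℝ := fun t => u ^ (n + 1) + t ^ (n + 1) with hB
  have hBpos : ∀ t, 0 ≤ t → 0 < B t := fun t ht => by
    have := pow_pos hu (n + 1)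
    have := pow_nonneg ht (n + 1)
    simp only [hB]; linarith
  set C : ℝ := 1 + (1 + u ^ (n + 1)) ^ (-ν.re) with hC
  have hC0 : 0 ≤ C := by positivity
  have hBC : ∀ t, 1 ≤ t → (B t) ^ (-ν.re) ≤ C * t ^ (-(((n + 1 : ℕ) : ℝ) * ν.re)) :=
    fun t ht => rpow_neg_add_pow_le (n + 1) ν.re hu ht
  set f : ℝ → ℂ := fun t => (t : ℂ) ^ (s - 1) * (Real.cos (y * t) : ℂ) * (B t : ℂ) ^ (-ν) with hf
  set g : ℝ → ℂ := fun t => (t : ℂ) ^ (s - 1) * (B t : ℂ) ^ (-ν) with hg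
  set g' : ℝ → ℂ := fun t =>
    ((s - 1) * (t : ℂ) ^ (s - 1 - 1) * ((1 : ℝ) : ℂ)) * (B t : ℂ) ^ (-ν) +
      (t : ℂ) ^ (s - 1) * (-ν * (B t : ℂ) ^ (-ν - 1) * (((n + 1 : ℕ) * t ^ n : ℝ) : ℂ)) with hg'
  have hBd : ∀ t, HasDerivAt B ((n + 1 : ℕ) * t ^ n) t := fun t =>
    (hasDerivAt_pow (n + 1) t).const_add (u ^ (n + 1))
  have hgd : ∀ t, 0 < t → HasDerivAt g (g' t) t := fun t ht =>
    (hasDerivAt_ofReal_cpow (s - 1) (hasDerivAt_id t) ht).mul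
      (hasDerivAt_ofReal_cpow (-ν) (hBd t) (hBpos t ht.le))
  have hBcont : ∀ c : ℂ, ContinuousOn (fun t : ℝ => (B t : ℂ) ^ c) (Ici 0) := fun c t ht =>
    (hasDerivAt_ofReal_cpow c (hBd t) (hBpos t ht)).continuousAt.continuousWithinAt
  have htcont : ∀ c : ℂ, ContinuousOn (fun t : ℝ => (t : ℂ) ^ c) (Ioi 0) := fun c t ht =>
    (hasDerivAt_ofReal_cpow c (hasDerivAt_id t) ht).continuousAt.continuousWithinAt
  have hBcont' : ∀ c : ℂ, ContinuousOn (fun t : ℝ => (B t : ℂ) ^ c) (Ioi 0) := fun c =>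
    (hBcont c).mono Ioi_subset_Ici_self
  have hg'cont : ContinuousOn g' (Ioi 0) := by
    refine ContinuousOn.add ?_ ?_
    · exact ((continuousOn_const.mul (htcont _)).mul continuousOn_const).mul (hBcont' _)
    · refine (htcont _).mul ((continuousOn_const.mul (hBcont' _)).mul ?_)
      exact Continuous.continuousOn (by fun_prop)
  have hfcont : ContinuousOn f (Ioi 0) := by
    refine ((htcont _).mul ?_).mul (hBcont' _)
    exact Continuous.continuousOn (by fun_prop)
  have hgb : ∀ t, 1 ≤ t → ‖g t‖ ≤ C * t ^ e := fun t ht => by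
    have ht0 : 0 < t := by linarith
    simp only [hg]
    rw [norm_mul, Complex.norm_cpow_eq_rpow_re_of_pos ht0,
      Complex.norm_cpow_eq_rpow_re_of_pos (hBpos t ht0.le)]
    simp only [Complex.sub_re, Complex.one_re, Complex.neg_re]
    calc t ^ (s.re - 1) * B t ^ (-ν.re)
        ≤ t ^ (s.re - 1) * (C * t ^ (-(((n + 1 : ℕ) : ℝ) * ν.re))) := by
          gcongr; exact hBC t ht
      _ = C * t ^ e := by
          rw [mul_left_comm, ← Real.rpow_add ht0, he]; congr 2
  have hg'b : ∀ t, 1 ≤ t →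
      ‖g' t‖ ≤ (‖s - 1‖ + ‖ν‖ * (n + 1 : ℕ)) * C * t ^ (e - 1) := fun t ht => by
    have ht0 : 0 < t := by linarith
    have hBt := hBpos t ht0.le
    have e1 : t ^ (s.re - 1 - 1) * (C * t ^ (-(((n + 1 : ℕ) : ℝ) * ν.re))) = C * t ^ (e - 1) := by
      rw [mul_left_comm, ← Real.rpow_add ht0, he]; congr 2; ring
    have k1 : t ^ (s.re - 1 - 1) * B t ^ (-ν.re) ≤ C * t ^ (e - 1) := by
      rw [← e1]; gcongr; exact hBC t ht
    -- One factor `1 / B t` absorbs `t ^ (n + 1)`, so both terms of `g'` have the same bound.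
    have k2 : t ^ (s.re - 1) * B t ^ (-ν.re - 1) * t ^ n ≤ t ^ (s.re - 1 - 1) * B t ^ (-ν.re) := by
      have hle : t ^ (n + 1) ≤ B t := by
        simp only [hB]; have := pow_pos hu (n + 1); linarith
      rw [Real.rpow_sub_one hBt.ne', Real.rpow_sub_one ht0.ne' (s.re - 1)]
      have hq : t ^ n / B t ≤ 1 / t := by
        rw [div_le_div_iff₀ hBt ht0, one_mul, ← pow_succ]; exact hle
      calc t ^ (s.re - 1) * (B t ^ (-ν.re) / B t) * t ^ n
          = t ^ (s.re - 1) * B t ^ (-ν.re) * (t ^ n / B t) := by ring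
        _ ≤ t ^ (s.re - 1) * B t ^ (-ν.re) * (1 / t) := by gcongr
        _ = _ := by ring
    simp only [hg']
    refine (norm_add_le _ _).trans ?_
    simp only [norm_mul, Complex.norm_cpow_eq_rpow_re_of_pos ht0,
      Complex.norm_cpow_eq_rpow_re_of_pos hBt, Complex.norm_real, norm_neg, Complex.sub_re,
      Complex.one_re, Complex.neg_re, norm_one, mul_one]
    rw [Real.norm_of_nonneg (by positivity : (0 : ℝ) ≤ ((n + 1 : ℕ) : ℝ)),
      Real.norm_of_nonneg (by positivity : (0 : ℝ) ≤ t ^ n)]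
    calc ‖s - 1‖ * t ^ (s.re - 1 - 1) * B t ^ (-ν.re) +
          t ^ (s.re - 1) * (‖ν‖ * B t ^ (-ν.re - 1) * (((n + 1 : ℕ) : ℝ) * t ^ n))
        = ‖s - 1‖ * (t ^ (s.re - 1 - 1) * B t ^ (-ν.re)) +
          ‖ν‖ * (n + 1 : ℕ) * (t ^ (s.re - 1) * B t ^ (-ν.re - 1) * t ^ n) := by ring
      _ ≤ ‖s - 1‖ * (C * t ^ (e - 1)) + ‖ν‖ * (n + 1 : ℕ) * (C * t ^ (e - 1)) := by
          exact add_le_add (mul_le_mul_of_nonneg_left k1 (norm_nonneg _))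
            (mul_le_mul_of_nonneg_left (k2.trans k1) (by positivity))
      _ = _ := by ring
  set h : ℝ → ℂ := fun t => g' t * ((Real.sin (y * t) / y : ℝ) : ℂ) with hh
  set F : ℝ → ℂ := fun t => g t * ((Real.sin (y * t) / y : ℝ) : ℂ) with hF
  have hsin : ∀ t, ‖((Real.sin (y * t) / y : ℝ) : ℂ)‖ ≤ 1 / y := fun t => by
    rw [Complex.norm_real, Real.norm_eq_abs, abs_div, abs_of_pos hy]
    gcongr; exact Real.abs_sin_le_one _
  have hhcont : ContinuousOn h (Ioi 0) :=
    hg'cont.mul (Continuous.continuousOn (by fun_prop))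
  have hhint : IntegrableOn h (Ioi 1) := by
    have hdom : IntegrableOn (fun t : ℝ => (‖s - 1‖ + ‖ν‖ * (n + 1 : ℕ)) * C * t ^ (e - 1) * (1 / y))
        (Ioi 1) :=
      ((integrableOn_Ioi_rpow_of_lt (by linarith : e - 1 < -1) one_pos).const_mul _).mul_const _
    refine Integrable.mono' hdom
      ((hhcont.mono (Ioi_subset_Ioi zero_le_one)).aestronglyMeasurable measurableSet_Ioi) ?_
    filter_upwards [ae_restrict_mem measurableSet_Ioi] with t ht
    have ht1 : 1 ≤ t := le_of_lt ht
    have ht0 : 0 < t := by linarith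
    simp only [hh]
    rw [norm_mul]
    exact mul_le_mul (hg'b t ht1) (hsin t) (norm_nonneg _) (by positivity)
  have hFlim : Tendsto F atTop (𝓝 0) := by
    have hlim : Tendsto (fun t : ℝ => C * t ^ e * (1 / y)) atTop (𝓝 0) := by
      have := ((tendsto_rpow_neg_atTop (by linarith : 0 < -e)).const_mul C).mul_const (1 / y)
      simpa using this
    refine squeeze_zero_norm' ?_ hlim
    filter_upwards [eventually_ge_atTop 1] with t ht
    have ht0 : 0 < t := by linarith
    simp only [hF]
    rw [norm_mul]
    exact mul_le_mul (hgb t ht) (hsin t) (norm_nonneg _) (by positivity)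
  have hFd : ∀ t, 0 < t → HasDerivAt F (f t + h t) t := fun t ht => by
    have h1 : HasDerivAt (fun t => Real.sin (y * t) / y) (Real.cos (y * t)) t := by
      have := ((((hasDerivAt_id t).const_mul y).sin).div_const y)
      refine this.congr_deriv ?_
      simp only [id, mul_one]
      field_simp
    have h2 := (hgd t ht).mul h1.ofReal_comp
    refine h2.congr_deriv ?_
    simp only [hf, hh, hg]
    ring
  have hf01 : IntervalIntegrable f volume 0 1 := by
    have h1 : IntervalIntegrable (fun t : ℝ => (t : ℂ) ^ (s - 1)) volume 0 1 :=
      intervalIntegral.intervalIntegrable_cpow' (by simpa using hs0)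
    refine (h1.mul_continuousOn (Continuous.continuousOn (by fun_prop))).mul_continuousOn
      ((hBcont (-ν)).mono ?_)
    rw [uIcc_of_le zero_le_one]
    exact Icc_subset_Ici_self
  have hsub : ∀ M : ℝ, 1 ≤ M → uIcc 1 M ⊆ Ioi 0 := fun M hM t ht => by
    rw [uIcc_of_le hM] at ht
    exact lt_of_lt_of_le one_pos ht.1
  refine ⟨(∫ t in (0 : ℝ)..1, f t) + (0 - F 1 - ∫ t in Ioi (1 : ℝ), h t), ?_⟩
  have hlim := (((hFlim.sub_const (F 1)).sub
    (intervalIntegral_tendsto_integral_Ioi 1 hhint tendsto_id)).const_add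
      (∫ t in (0 : ℝ)..1, f t))
  refine hlim.congr' ?_
  filter_upwards [eventually_ge_atTop 1] with M hM
  have hf1 : IntervalIntegrable f volume 1 M := (hfcont.mono (hsub M hM)).intervalIntegrable
  have hh1 : IntervalIntegrable h volume 1 M := (hhcont.mono (hsub M hM)).intervalIntegrable
  have hftc := intervalIntegral.integral_eq_sub_of_hasDerivAt
    (fun t ht => hFd t (hsub M hM ht)) (hf1.add hh1)
  rw [intervalIntegral.integral_add hf1 hh1] at hftc
  rw [← intervalIntegral.integral_of_le (by linarith : (0 : ℝ) ≤ M),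
    ← intervalIntegral.integral_add_adjacent_intervals hf01 hf1, ← hftc]
  simp
end

section
/- The limit as s → 1/2 (through s ∈ ℂ, s ≠ 1/2) of (1/2)ζ(2s) + Γ(1−s)Γ(2s−1)ζ(2s−1)/Γ(s) exists and equals γ/2 − (1/2)log(2π) − log 2, where γ is the Euler–Mascheroni constant. -/
/-!
Put `h s = Γ(1 - s) Γ(2s) ζ(2s - 1) / Γ(s)`, which is holomorphic at `1/2` with `h(1/2) = ζ(0) = -1/2`.
Since `Γ(2s) = (2s - 1) Γ(2s - 1)`, the function in the theorem equals, for `s ≠ 1/2`,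
`(1/2) (ζ(2s) - 1/(2s - 1)) + (1/2) (h(s) - h(1/2)) / (s - 1/2)`:
the two simple poles cancel. The first summand tends to `γ/2` by the Laurent expansion of `ζ` at `1`,
and the second to `h'(1/2)/2`. The derivative is computed from `Γ'(1/2)`, `Γ'(1) = -γ` and
`ζ'(0) = -log(2π)/2`, giving `h'(1/2) = -2 log 2 - log(2π)`.
-/

noncomputable section

open Complex Filter Topology

/-- The holomorphic part `Γ(1 - s) Γ(2s) ζ(2s - 1) / Γ(s)` of the second summand, obtained by
removing its simple pole `1 / (2s - 1)` at `1/2`. -/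
def regularPart (s : ℂ) : ℂ :=
  Gamma (1 - s) * Gamma (2 * s) * riemannZeta (2 * s - 1) / Gamma s

lemma sqrt_pi_ne_zero : ((√Real.pi : ℝ) : ℂ) ≠ 0 :=
  ofReal_ne_zero.mpr (Real.sqrt_pos.mpr Real.pi_pos).ne'

lemma Gamma_half_eq_sqrt_pi : Gamma (1 / 2) = ((√Real.pi : ℝ) : ℂ) := by
  have h := Complex.Gamma_ofReal (1 / 2)
  rw [Real.Gamma_one_half_eq] at h
  rw [← h]
  push_cast
  rfl

lemma regularPart_half : regularPart (1 / 2) = -1 / 2 := by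
  have h0 := sqrt_pi_ne_zero
  have e1 : (1 - 1 / 2 : ℂ) = 1 / 2 := by norm_num
  have e2 : (2 * (1 / 2) : ℂ) = 1 := by norm_num
  rw [regularPart, e1, e2, sub_self, riemannZeta_zero, Gamma_one, Gamma_half_eq_sqrt_pi]
  field_simp

lemma hasDerivAt_regularPart_half :
    HasDerivAt regularPart (-(2 * log 2) - log (2 * Real.pi)) (1 / 2) := by
  have h0 := sqrt_pi_ne_zero
  have e1 : (1 - 1 / 2 : ℂ) = 1 / 2 := by norm_num
  have e2 : (2 * (1 / 2) : ℂ) = 1 := by norm_num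
  have e3 : (2 * (1 / 2) - 1 : ℂ) = 0 := by norm_num
  have l1 : HasDerivAt (fun s : ℂ => 1 - s) (-1) (1 / 2) := (hasDerivAt_id _).const_sub 1
  have l2 : HasDerivAt (fun s : ℂ => 2 * s) 2 (1 / 2) := by
    simpa using (hasDerivAt_id (1 / 2 : ℂ)).const_mul 2
  have l3 : HasDerivAt (fun s : ℂ => 2 * s - 1) 2 (1 / 2) := l2.sub_const 1
  have z : HasDerivAt riemannZeta (-log (2 * Real.pi) / 2) 0 := by
    rw [← deriv_riemannZeta_zero]
    exact (differentiableAt_riemannZeta zero_ne_one).hasDerivAt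
  have d1 := HasDerivAt.comp_of_eq (1 / 2 : ℂ) hasDerivAt_Gamma_one_half l1 e1.symm
  have d2 := HasDerivAt.comp_of_eq (1 / 2 : ℂ) hasDerivAt_Gamma_one l2 e2.symm
  have d3 := HasDerivAt.comp_of_eq (1 / 2 : ℂ) z l3 e3.symm
  have hG : Gamma (1 / 2) ≠ 0 := by rw [Gamma_half_eq_sqrt_pi]; exact h0
  refine (((d1.mul d2).mul d3).div hasDerivAt_Gamma_one_half hG).congr_deriv ?_
  simp only [Function.comp_apply, Pi.mul_apply, e1, e2, sub_self, riemannZeta_zero, Gamma_one,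
    Gamma_half_eq_sqrt_pi]
  field_simp
  ring

theorem zeta_gamma_limit_at_half :
    Filter.Tendsto (fun s : ℂ =>
        (1 / 2) * riemannZeta (2 * s) +
          Complex.Gamma (1 - s) * Complex.Gamma (2 * s - 1) * riemannZeta (2 * s - 1) /
            Complex.Gamma s)
      (nhdsWithin (1 / 2 : ℂ) {(1 / 2 : ℂ)}ᶜ)
      (nhds (((Real.eulerMascheroniConstant / 2 - Real.log (2 * Real.pi) / 2
        - Real.log 2 : ℝ)) : ℂ)) := by
  have hslope := hasDerivAt_iff_tendsto_slope.mp hasDerivAt_regularPart_half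
  have hdouble : Tendsto (fun s : ℂ => 2 * s) (𝓝[≠] (1 / 2)) (𝓝[≠] 1) := by
    refine tendsto_nhdsWithin_iff.mpr ⟨?_, ?_⟩
    · have hc : Continuous (fun s : ℂ => 2 * s) := by fun_prop
      have ht := hc.tendsto (1 / 2)
      norm_num at ht
      simpa using ht.mono_left nhdsWithin_le_nhds
    · filter_upwards [self_mem_nhdsWithin] with s hs h
      apply hs
      have heq : 2 * s = 1 := h
      change s = 1 / 2
      linear_combination heq / 2
  have hzeta := tendsto_riemannZeta_sub_one_div.comp hdouble
  have hsum := (hzeta.const_mul (1 / 2)).add (hslope.const_mul (1 / 2))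
  have hval : (1 / 2 : ℂ) * Real.eulerMascheroniConstant
      + 1 / 2 * (-(2 * log 2) - log (2 * Real.pi))
      = ((Real.eulerMascheroniConstant / 2 - Real.log (2 * Real.pi) / 2 - Real.log 2 : ℝ) : ℂ) := by
    have hl : ((Real.log (2 * Real.pi) : ℝ) : ℂ) = log (2 * Real.pi) := by
      rw [ofReal_log Real.two_pi_pos.le]
      push_cast
      rfl
    have hl2 : ((Real.log 2 : ℝ) : ℂ) = log 2 := by
      rw [ofReal_log zero_le_two]
      push_cast
      rfl
    rw [ofReal_sub, ofReal_sub, ofReal_div, ofReal_div, hl, hl2]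
    push_cast
    ring
  rw [hval] at hsum
  refine hsum.congr' ?_
  filter_upwards [self_mem_nhdsWithin] with s hs
  have ht : 2 * s - 1 ≠ 0 := fun h => hs (by
    change s = 1 / 2
    linear_combination h / 2)
  have hGamma : Gamma (2 * s) = (2 * s - 1) * Gamma (2 * s - 1) := by
    rw [← Gamma_add_one _ ht, sub_add_cancel]
  have hhalf : s - 1 / 2 = (2 * s - 1) / 2 := by ring
  rw [Function.comp_apply, slope_def_field, regularPart_half, regularPart, hGamma, hhalf]
  -- `1 / Γ(s)` is kept opaque, so that `Γ(s) ≠ 0` is never needed.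
  simp only [div_eq_mul_inv _ (Gamma s)]
  generalize (Gamma s)⁻¹ = g
  field_simp
  ring
end
end
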